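/- arXiv:2110.13886 — 3 statements merged into one kernel-verified Lean document; each statement's English description precedes it below -/
import Mathlib

section
/- For every integer e ≥ 7 and each i ∈ {2,3}, there exists a finite metabelian σ-group M of order 3^{8+e}, generated by two elements x and y satisfying w^3 = 1, y^3 = s₇, s_j^3 = s_{j+2}^2 s_{j+3} for j = 2,3,4, s₅^3 = s₇^2, t₃ = s₃ s₇ w^{i-1}, and t_j = s_j for j = 4,…,7, whose abelianization is isomorphic to (ZMod (3^e)) × (ZMod 3); moreover there exists a finite group G of order 3^{10+e} with the same abelianization, admitting a σ-automorphism, with second derived subgroup nontrivial and third derived subgroup trivial (derived length exactly 3), such that G/G'' is isomorphic to M. -/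
/-- The commutator `[a,b] = a⁻¹ * b⁻¹ * a * b`. -/
def comm' {G : Type*} [Group G] (a b : G) : G := a⁻¹ * b⁻¹ * a * b

/-- `s₂ = [y,x]` and `s_j = [s_(j-1), x]` for `j ≥ 3`. -/
def sgen {G : Type*} [Group G] (x y : G) : ℕ → G
  | 0 => 1
  | 1 => 1
  | 2 => comm' y x
  | (n + 3) => comm' (sgen x y (n + 2)) x

/-- `t_j = [s_(j-1), y]` for `j ≥ 3`. -/
def tgenD {G : Type*} [Group G] (x y : G) (j : ℕ) : G := comm' (sgen x y (j - 1)) y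

/-- `t₂ = [y,x]` and `t_j = [t_(j-1), y]` for `j ≥ 3`. -/
def tgenB {G : Type*} [Group G] (x y : G) : ℕ → G
  | 0 => 1
  | 1 => 1
  | 2 => comm' y x
  | (n + 3) => comm' (tgenB x y (n + 2)) y

/-- A σ-group: a group admitting an automorphism acting as inversion on the
abelianization. -/
def IsSigmaGroup (G : Type*) [Group G] : Prop :=
  ∃ σ : G ≃* G, ∀ g : G, Abelianization.of (σ g) = (Abelianization.of g)⁻¹

/-- A group is metabelian if its commutator subgroup is abelian, i.e. the second
derived subgroup is trivial. -/
def IsMetabelian (G : Type*) [Group G] : Prop := derivedSeries G 2 = ⊥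

/-- Data defining a twisted group structure on an abelian group. -/
structure TwData (E : Type) [AddCommGroup E] where
  z : E →+ E
  om : E →+ E →+ ZMod 27
  ka : ZMod 27 →+ E
  ch : E →+ ZMod 3
  hz : ∀ a, z (z (z a)) = a
  hom : ∀ a b, om (z a) (z b) = om a b
  hzk : ∀ t, z (ka t) = ka t
  hok₁ : ∀ t b, om (ka t) b = 0
  hok₂ : ∀ t b, om b (ka t) = 0
  hck : ∀ t, ch (ka t) = 0
  hcz : ∀ a, ch (z a) = ch a
  halt : ∀ a, om a a = 0

namespace TwData

variable {E : Type} [AddCommGroup E] (D : TwData E)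

/-- the action of the exponent `m` mod 3 -/
def act (m : ZMod 3) (a : E) : E :=
  if m = 0 then a else if m = 1 then D.z a else D.z (D.z a)

lemma act_zero (a : E) : D.act 0 a = a := by simp [act]
lemma act_one (a : E) : D.act 1 a = D.z a := by simp [act]
lemma act_two (a : E) : D.act 2 a = D.z (D.z a) := by
  have h0 : (2 : ZMod 3) ≠ 0 := by decide
  have h1 : (2 : ZMod 3) ≠ 1 := by decide
  simp [act, h0, h1]

lemma zmod3_cases (m : ZMod 3) : m = 0 ∨ m = 1 ∨ m = 2 := by
  revert m; decide

lemma act_act (m n : ZMod 3) (a : E) : D.act m (D.act n a) = D.act (m + n) a := by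
  have h2 : (1 : ZMod 3) + 1 = 2 := by decide
  have h3 : (1 : ZMod 3) + 2 = 0 := by decide
  have h4 : (2 : ZMod 3) + 1 = 0 := by decide
  have h5 : (2 : ZMod 3) + 2 = 1 := by decide
  rcases zmod3_cases m with rfl | rfl | rfl <;> rcases zmod3_cases n with rfl | rfl | rfl <;>
    simp [act_zero, act_one, act_two, h2, h3, h4, h5, D.hz]

lemma act_add (m : ZMod 3) (a b : E) : D.act m (a + b) = D.act m a + D.act m b := by
  rcases zmod3_cases m with rfl | rfl | rfl <;> simp [act_zero, act_one, act_two]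

lemma act_neg (m : ZMod 3) (a : E) : D.act m (-a) = -D.act m a := by
  rcases zmod3_cases m with rfl | rfl | rfl <;> simp [act_zero, act_one, act_two]

lemma act_map_zero (m : ZMod 3) : D.act m 0 = 0 := by
  rcases zmod3_cases m with rfl | rfl | rfl <;> simp [act_zero, act_one, act_two]

lemma act_ka (m : ZMod 3) (t : ZMod 27) : D.act m (D.ka t) = D.ka t := by
  rcases zmod3_cases m with rfl | rfl | rfl <;> simp [act_zero, act_one, act_two, D.hzk]

lemma ch_act (m : ZMod 3) (a : E) : D.ch (D.act m a) = D.ch a := by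
  rcases zmod3_cases m with rfl | rfl | rfl <;> simp [act_zero, act_one, act_two, D.hcz]

lemma om_act (m : ZMod 3) (a b : E) : D.om (D.act m a) (D.act m b) = D.om a b := by
  rcases zmod3_cases m with rfl | rfl | rfl <;> simp [act_zero, act_one, act_two, D.hom]

end TwData

/-- The group attached to the data. -/
@[ext] structure TwGp {E : Type} [AddCommGroup E] (D : TwData E) where
  val : E

namespace TwGp

variable {E : Type} [AddCommGroup E] {D : TwData E}

instance : Mul (TwGp D) :=
  ⟨fun g h => ⟨D.act (D.ch h.val) g.val + h.val + D.ka (D.om (D.act (D.ch h.val) g.val) h.val)⟩⟩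
instance : One (TwGp D) := ⟨⟨0⟩⟩
instance : Inv (TwGp D) := ⟨fun g => ⟨-D.act (-D.ch g.val) g.val⟩⟩

lemma mul_val (g h : TwGp D) : (g * h).val =
    D.act (D.ch h.val) g.val + h.val + D.ka (D.om (D.act (D.ch h.val) g.val) h.val) := rfl
lemma one_val : (1 : TwGp D).val = 0 := rfl
lemma inv_val (g : TwGp D) : (g⁻¹).val = -D.act (-D.ch g.val) g.val := rfl

lemma ch_mul (g h : TwGp D) : D.ch (g * h).val = D.ch g.val + D.ch h.val := by
  simp [mul_val, D.ch_act, D.hck]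

instance : Group (TwGp D) :=
  Group.ofLeftAxioms
    (by
      intro g h k
      ext
      rw [mul_val, mul_val g (h * k), ch_mul, mul_val g h, mul_val h k]
      simp only [D.act_add, D.act_act, D.act_ka, map_add, AddMonoidHom.add_apply, D.hok₁, D.hok₂]
      rw [add_comm (D.ch k.val) (D.ch h.val)]
      have := D.om_act (D.ch k.val) (D.act (D.ch h.val) g.val) h.val
      rw [D.act_act, add_comm] at this
      rw [this]
      simp only [map_zero, add_zero]
      abel)
    (by
      intro g
      ext
      simp [mul_val, one_val, D.act_map_zero])
    (by
      intro g
      ext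
      simp [mul_val, one_val, inv_val, D.act_neg, D.act_act, D.act_zero, D.halt])

end TwGp

/-- Multiplication by `c` as a map `ZMod m → ZMod n`. -/
def sc (m n : ℕ) (c : ℤ) (h : (n : ℤ) ∣ c * m) : ZMod m →+ ZMod n :=
  ZMod.lift m ⟨(AddMonoidHom.mulLeft (c : ZMod n)).comp (Int.castAddHom (ZMod n)), by
    simp only [AddMonoidHom.coe_comp, Int.coe_castAddHom, Function.comp_apply,
      AddMonoidHom.coe_mulLeft]
    rw [← Int.cast_mul]
    exact (ZMod.intCast_zmod_eq_zero_iff_dvd _ _).2 h⟩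

lemma sc_int (m n : ℕ) (c : ℤ) (h : (n : ℤ) ∣ c * m) (x : ℤ) :
    sc m n c h (x : ZMod m) = (c : ZMod n) * (x : ZMod n) := by
  simp [sc]

section Concrete

/-- underlying abelian group -/
abbrev EE (e k : ℕ) : Type := ZMod (3 ^ (e + k)) × ZMod 81 × ZMod 27

lemma dvd_P (e k : ℕ) (hk : k ≤ 3) (p : ℤ) :
    ((3 ^ (e + k) : ℕ) : ℤ) ∣ (p * 3 ^ e) * (27 : ℕ) := by
  have h : (3 : ℤ) ^ k ∣ 3 ^ 3 := pow_dvd_pow 3 hk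
  have h2 : (3 : ℤ) ^ (e + k) ∣ 3 ^ e * 3 ^ 3 := by
    rw [pow_add]; exact mul_dvd_mul_left _ h
  push_cast
  calc (3 : ℤ) ^ (e + k) ∣ 3 ^ e * 3 ^ 3 := h2
    _ ∣ p * 3 ^ e * 27 := ⟨p, by ring⟩

/-- the map `t ↦ p 3^e t` -/
def PP (e k : ℕ) (hk : k ≤ 3) (p : ℤ) : ZMod 27 →+ ZMod (3 ^ (e + k)) :=
  sc 27 _ (p * 3 ^ e) (dvd_P e k hk p)

/-- multiplication by 24 -/
def A24 : ZMod 27 →+ ZMod 81 := sc 27 81 24 (by decide)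
/-- multiplication by -27 -/
def A27 : ZMod 27 →+ ZMod 81 := sc 27 81 (-27) (by decide)
/-- reduction -/
def R27 : ZMod 81 →+ ZMod 27 := sc 81 27 1 (by decide)
/-- reduction -/
def R3 : ZMod 81 →+ ZMod 3 := sc 81 3 1 (by decide)
/-- reduction of the first coordinate -/
def C3 (e k : ℕ) (he : 1 ≤ e) : ZMod (3 ^ (e + k)) →+ ZMod 3 :=
  sc _ 3 1 (by
    rw [one_mul]
    exact_mod_cast dvd_pow_self 3 (by omega))

lemma PP_int (e k : ℕ) (hk : k ≤ 3) (p x : ℤ) :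
    PP e k hk p (x : ZMod 27) = (p : ZMod (3 ^ (e + k))) * 3 ^ e * x := by
  rw [PP, sc_int]; push_cast; ring
lemma A24_int (x : ℤ) : A24 (x : ZMod 27) = 24 * (x : ZMod 81) := by
  rw [A24, sc_int]; push_cast; ring
lemma A27_int (x : ℤ) : A27 (x : ZMod 27) = -27 * (x : ZMod 81) := by
  rw [A27, sc_int]; push_cast; ring
lemma R27_int (x : ℤ) : R27 (x : ZMod 81) = (x : ZMod 27) := by
  rw [R27, sc_int]; push_cast; ring
lemma R3_int (x : ℤ) : R3 (x : ZMod 81) = (x : ZMod 3) := by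
  rw [R3, sc_int]; push_cast; ring
lemma C3_int (e k : ℕ) (he : 1 ≤ e) (x : ℤ) :
    C3 e k he (x : ZMod (3 ^ (e + k))) = (x : ZMod 3) := by
  rw [C3, sc_int]; push_cast; ring

/-- the integer triple -/
def tr (e k : ℕ) (n a b : ℤ) : EE e k := ((n : ZMod (3 ^ (e + k))), (a : ZMod 81), (b : ZMod 27))

lemma tr_surj (e k : ℕ) (v : EE e k) : ∃ n a b : ℤ, v = tr e k n a b := by
  obtain ⟨n, a, b⟩ := v
  obtain ⟨n, rfl⟩ := ZMod.intCast_surjective n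
  obtain ⟨a, rfl⟩ := ZMod.intCast_surjective a
  obtain ⟨b, rfl⟩ := ZMod.intCast_surjective b
  exact ⟨n, a, b, rfl⟩

lemma tr_eq (e k : ℕ) {n a b n' a' b' : ℤ} (h1 : (3 ^ (e + k) : ℤ) ∣ n - n')
    (h2 : (81 : ℤ) ∣ a - a') (h3 : (27 : ℤ) ∣ b - b') : tr e k n a b = tr e k n' a' b' := by
  have e1 : (n : ZMod (3 ^ (e + k))) = n' := by
    rw [← sub_eq_zero, ← Int.cast_sub, ZMod.intCast_zmod_eq_zero_iff_dvd]
    exact_mod_cast h1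
  have e2 : (a : ZMod 81) = a' := by
    rw [← sub_eq_zero, ← Int.cast_sub]
    exact (ZMod.intCast_zmod_eq_zero_iff_dvd _ 81).2 h2
  have e3 : (b : ZMod 27) = b' := by
    rw [← sub_eq_zero, ← Int.cast_sub]
    exact (ZMod.intCast_zmod_eq_zero_iff_dvd _ 27).2 h3
  rw [tr, tr, e1, e2, e3]

lemma tr_add (e k : ℕ) (n a b n' a' b' : ℤ) :
    tr e k n a b + tr e k n' a' b' = tr e k (n + n') (a + a') (b + b') := by
  simp [tr]

/-- the order three automorphism -/
def zz (e k : ℕ) (hk : k ≤ 3) (p : ℤ) : EE e k →+ EE e k where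
  toFun v := (v.1 + PP e k hk p v.2.2, v.2.1 + A24 v.2.2, R27 v.2.1 - 2 * v.2.2)
  map_zero' := by simp
  map_add' v w := by
    refine Prod.ext ?_ (Prod.ext ?_ ?_)
    · simp only [Prod.fst_add, Prod.snd_add, map_add]; abel
    · simp only [Prod.fst_add, Prod.snd_add, map_add]; abel
    · simp only [Prod.fst_add, Prod.snd_add, map_add]; ring

lemma zz_tr (e k : ℕ) (hk : k ≤ 3) (p n a b : ℤ) :
    zz e k hk p (tr e k n a b) = tr e k (n + p * 3 ^ e * b) (a + 24 * b) (a - 2 * b) := by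
  simp [zz, tr, PP_int, A24_int, R27_int]

/-- the alternating form -/
def oo (e k : ℕ) : EE e k →+ EE e k →+ ZMod 27 :=
  AddMonoidHom.mk' (fun v => AddMonoidHom.mk'
      (fun w => R27 v.2.1 * w.2.2 - v.2.2 * R27 w.2.1)
      (by intro a b; simp only [Prod.snd_add, Prod.fst_add, map_add]; ring))
    (by
      intro a b; ext w
      simp only [Prod.snd_add, Prod.fst_add, map_add, AddMonoidHom.add_apply,
        AddMonoidHom.mk'_apply]; ring)

lemma oo_tr (e k : ℕ) (n a b n' a' b' : ℤ) :
    oo e k (tr e k n a b) (tr e k n' a' b') = ((a * b' - b * a' : ℤ) : ZMod 27) := by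
  simp [oo, tr, R27_int]

/-- the central map -/
def kk (e k : ℕ) (hk : k ≤ 3) (p : ℤ) : ZMod 27 →+ EE e k :=
  AddMonoidHom.mk' (fun t => (PP e k hk p t, A27 t, 0)) (by intro a b; simp)

lemma kk_int (e k : ℕ) (hk : k ≤ 3) (p t : ℤ) :
    kk e k hk p (t : ZMod 27) = tr e k (p * 3 ^ e * t) (-27 * t) 0 := by
  simp [kk, tr, PP_int, A27_int]

/-- the exponent -/
def cc (e k : ℕ) (he : 1 ≤ e) : EE e k →+ ZMod 3 :=
  AddMonoidHom.mk' (fun v => C3 e k he v.1 + R3 v.2.1) (by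
    intro a b; simp only [Prod.snd_add, Prod.fst_add, map_add]; ring)

lemma cc_tr (e k : ℕ) (he : 1 ≤ e) (n a b : ℤ) :
    cc e k he (tr e k n a b) = ((n + a : ℤ) : ZMod 3) := by
  simp [cc, tr, C3_int, R3_int]

lemma int3_eq {a b : ℤ} (h : (3 : ℤ) ∣ a - b) : (a : ZMod 3) = (b : ZMod 3) := by
  rw [← sub_eq_zero, ← Int.cast_sub]
  exact (ZMod.intCast_zmod_eq_zero_iff_dvd _ 3).2 h

lemma int27_eq {a b : ℤ} (h : (27 : ℤ) ∣ a - b) : (a : ZMod 27) = (b : ZMod 27) := by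
  rw [← sub_eq_zero, ← Int.cast_sub]
  exact (ZMod.intCast_zmod_eq_zero_iff_dvd _ 27).2 h

lemma dvd_Q (e k : ℕ) (hk : k ≤ 3) (c : ℤ) : (3 ^ (e + k) : ℤ) ∣ 27 * 3 ^ e * c := by
  have h := dvd_P e k hk c
  push_cast at h
  rwa [show 27 * 3 ^ e * c = c * 3 ^ e * 27 by ring]

lemma dvd_three_pow {e : ℕ} (he : 1 ≤ e) : (3 : ℤ) ∣ 3 ^ e := dvd_pow_self 3 (by omega)

/-- the data -/
def DD (e k : ℕ) (he : 1 ≤ e) (hk : k ≤ 3) (p : ℤ) : TwData (EE e k) where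
  z := zz e k hk p
  om := oo e k
  ka := kk e k hk p
  ch := cc e k he
  hz v := by
    obtain ⟨n, a, b, rfl⟩ := tr_surj e k v
    simp only [zz_tr]
    refine tr_eq e k ?_ ⟨8 * b, by ring⟩ ⟨a - 3 * b, by ring⟩
    convert dvd_Q e k hk (p * b) using 1
    ring
  hom v w := by
    obtain ⟨n, a, b, rfl⟩ := tr_surj e k v
    obtain ⟨n', a', b', rfl⟩ := tr_surj e k w
    simp only [zz_tr, oo_tr]
    exact int27_eq ⟨- (a * b' - b * a'), by ring⟩
  hzk t := by
    obtain ⟨t, rfl⟩ := ZMod.intCast_surjective t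
    simp only [kk_int, zz_tr]
    exact tr_eq e k ⟨0, by ring⟩ ⟨0, by ring⟩ ⟨-t, by ring⟩
  hok₁ t w := by
    obtain ⟨t, rfl⟩ := ZMod.intCast_surjective t
    obtain ⟨n', a', b', rfl⟩ := tr_surj e k w
    simp only [kk_int, oo_tr]
    rw [int27_eq (b := 0) ⟨-t * b', by ring⟩, Int.cast_zero]
  hok₂ t w := by
    obtain ⟨t, rfl⟩ := ZMod.intCast_surjective t
    obtain ⟨n', a', b', rfl⟩ := tr_surj e k w
    simp only [kk_int, oo_tr]
    rw [int27_eq (b := 0) ⟨t * b', by ring⟩, Int.cast_zero]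
  hck t := by
    obtain ⟨t, rfl⟩ := ZMod.intCast_surjective t
    simp only [kk_int, cc_tr]
    obtain ⟨c, hc⟩ := dvd_three_pow he
    rw [int3_eq (b := 0) ⟨p * c * t - 9 * t, by rw [hc]; ring⟩, Int.cast_zero]
  hcz v := by
    obtain ⟨n, a, b, rfl⟩ := tr_surj e k v
    simp only [zz_tr, cc_tr]
    obtain ⟨c, hc⟩ := dvd_three_pow he
    exact int3_eq ⟨p * c * b + 8 * b, by rw [hc]; ring⟩
  halt v := by
    obtain ⟨n, a, b, rfl⟩ := tr_surj e k v
    simp only [oo_tr]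
    rw [int27_eq (b := 0) ⟨0, by ring⟩, Int.cast_zero]

/-- the groups -/
abbrev GG (e k : ℕ) (he : 1 ≤ e) (hk : k ≤ 3) (p : ℤ) : Type := TwGp (DD e k he hk p)

variable {e k : ℕ} {he : 1 ≤ e} {hk : k ≤ 3} {p : ℤ}

/-- general element with integer coordinates -/
def el (he : 1 ≤ e) (hk : k ≤ 3) (p : ℤ) (n t a b : ℤ) : GG e k he hk p :=
  ⟨tr e k (n + p * 3 ^ e * t) a b⟩

lemma el_surj0 (g : GG e k he hk p) : ∃ n a b : ℤ, g = el he hk p n 0 a b := by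
  obtain ⟨v⟩ := g
  obtain ⟨n, a, b, rfl⟩ := tr_surj e k v
  exact ⟨n, a, b, by simp [el]⟩

lemma el_eq {n n' t t' a a' b b' : ℤ} (h0 : n = n') (h1 : (3 ^ k : ℤ) ∣ t - t')
    (h2 : (81 : ℤ) ∣ a - a') (h3 : (27 : ℤ) ∣ b - b') :
    el he hk p n t a b = el he hk p n' t' a' b' := by
  subst h0
  refine TwGp.ext (tr_eq e k ?_ h2 h3)
  obtain ⟨c, hc⟩ := h1
  refine ⟨p * c, ?_⟩
  rw [pow_add]
  linear_combination (p * 3 ^ e) * hc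

lemma el_mul0 {n t a b n' t' a' b' : ℤ} (h : (3 : ℤ) ∣ n' + a') :
    el he hk p n t a b * el he hk p n' t' a' b' =
      el he hk p (n + n') (t + t' + (a * b' - b * a')) (a + a' - 27 * (a * b' - b * a'))
        (b + b') := by
  have hc : (DD e k he hk p).ch (el he hk p n' t' a' b').val = 0 := by
    obtain ⟨c, hc⟩ := dvd_three_pow he
    obtain ⟨d, hd⟩ := h
    change cc e k he (tr e k _ _ _) = 0
    rw [cc_tr, int3_eq (b := 0) ⟨d + p * c * t', by rw [hc]; linear_combination hd⟩, Int.cast_zero]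
  refine TwGp.ext ?_
  rw [TwGp.mul_val, hc, TwData.act_zero]
  change tr e k _ _ _ + tr e k _ _ _ + kk e k hk p (oo e k (tr e k _ _ _) (tr e k _ _ _)) = tr e k _ _ _
  rw [oo_tr, kk_int, tr_add, tr_add]
  exact tr_eq e k ⟨0, by ring⟩ ⟨0, by ring⟩ ⟨0, by ring⟩

lemma el_mul1 {n t a b n' t' a' b' : ℤ} (h : (3 : ℤ) ∣ n' + a' - 1) :
    el he hk p n t a b * el he hk p n' t' a' b' =
      el he hk p (n + n') (t + b + t' + ((a + 24 * b) * b' - (a - 2 * b) * a'))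
        (a + 24 * b + a' - 27 * ((a + 24 * b) * b' - (a - 2 * b) * a'))
        (a - 2 * b + b') := by
  have hc : (DD e k he hk p).ch (el he hk p n' t' a' b').val = 1 := by
    obtain ⟨c, hc⟩ := dvd_three_pow he
    obtain ⟨d, hd⟩ := h
    change cc e k he (tr e k _ _ _) = 1
    rw [cc_tr, int3_eq (b := 1) ⟨d + p * c * t', by rw [hc]; linear_combination hd⟩, Int.cast_one]
  refine TwGp.ext ?_
  rw [TwGp.mul_val, hc, TwData.act_one]
  change zz e k hk p (tr e k _ _ _) + tr e k _ _ _ +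
    kk e k hk p (oo e k (zz e k hk p (tr e k _ _ _)) (tr e k _ _ _)) = tr e k _ _ _
  rw [zz_tr, oo_tr, kk_int, tr_add, tr_add]
  exact tr_eq e k ⟨0, by ring⟩ ⟨0, by ring⟩ ⟨0, by ring⟩

lemma el_one : el he hk p 0 0 0 0 = 1 := by
  refine TwGp.ext ?_
  simp [el, TwGp.one_val, tr]

end Concrete

section Computations

variable {e k : ℕ} {he : 1 ≤ e} {hk : k ≤ 3} {p : ℤ}

lemma el_eq27 {n n' t t' a a' b b' : ℤ} (h0 : n = n') (h1 : (27 : ℤ) ∣ t - t')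
    (h2 : (81 : ℤ) ∣ a - a') (h3 : (27 : ℤ) ∣ b - b') :
    el he hk p n t a b = el he hk p n' t' a' b' := by
  refine el_eq h0 (dvd_trans ?_ h1) h2 h3
  have : (3 : ℤ) ^ k ∣ 3 ^ 3 := pow_dvd_pow 3 hk
  simpa using this

lemma comm'_eq {G : Type*} [Group G] {a b c : G} (h : a * b = b * a * c) : comm' a b = c := by
  unfold comm'
  rw [mul_assoc, h]; group

/-- first generator -/
def gx (he : 1 ≤ e) (hk : k ≤ 3) (p : ℤ) : GG e k he hk p := el he hk p 1 0 0 0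
/-- second generator -/
def gy (he : 1 ≤ e) (hk : k ≤ 3) (p : ℤ) : GG e k he hk p := el he hk p 0 0 1 0

lemma s2_val : sgen (gx he hk p) (gy he hk p) 2 = el he hk p 0 26 27 1 := by
  rw [sgen, gx, gy]
  apply comm'_eq
  rw [el_mul1 (by norm_num), el_mul1 (by norm_num), el_mul0 (by norm_num)]
  apply el_eq27 <;> norm_num

lemma s3_val : sgen (gx he hk p) (gy he hk p) 3 = el he hk p 0 25 24 24 := by
  rw [sgen, s2_val, gx]
  apply comm'_eq
  rw [el_mul1 (by norm_num), el_mul0 (by norm_num), el_mul0 (by norm_num)]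
  apply el_eq27 <;> norm_num

lemma s4_val : sgen (gx he hk p) (gy he hk p) 4 = el he hk p 0 15 9 6 := by
  rw [sgen, s3_val, gx]
  apply comm'_eq
  rw [el_mul1 (by norm_num), el_mul0 (by norm_num), el_mul0 (by norm_num)]
  apply el_eq27 <;> norm_num

lemma s5_val : sgen (gx he hk p) (gy he hk p) 5 = el he hk p 0 6 63 18 := by
  rw [sgen, s4_val, gx]
  apply comm'_eq
  rw [el_mul1 (by norm_num), el_mul0 (by norm_num), el_mul0 (by norm_num)]
  apply el_eq27 <;> norm_num

lemma s6_val : sgen (gx he hk p) (gy he hk p) 6 = el he hk p 0 18 27 9 := by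
  rw [sgen, s5_val, gx]
  apply comm'_eq
  rw [el_mul1 (by norm_num), el_mul0 (by norm_num), el_mul0 (by norm_num)]
  apply el_eq27 <;> norm_num

lemma s7_val : sgen (gx he hk p) (gy he hk p) 7 = el he hk p 0 9 54 0 := by
  rw [sgen, s6_val, gx]
  apply comm'_eq
  rw [el_mul1 (by norm_num), el_mul0 (by norm_num), el_mul0 (by norm_num)]
  apply el_eq27 <;> norm_num

lemma t3_val : tgenD (gx he hk p) (gy he hk p) 3 = el he hk p 0 2 78 24 := by
  rw [tgenD, s2_val, gy]
  apply comm'_eq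
  rw [el_mul1 (by norm_num), el_mul0 (by norm_num), el_mul0 (by norm_num)]
  apply el_eq27 <;> norm_num

lemma t4_val : tgenD (gx he hk p) (gy he hk p) 4 = el he hk p 0 9 9 6 := by
  rw [tgenD, s3_val, gy]
  apply comm'_eq
  rw [el_mul1 (by norm_num), el_mul0 (by norm_num), el_mul0 (by norm_num)]
  apply el_eq27 <;> norm_num

lemma t5_val : tgenD (gx he hk p) (gy he hk p) 5 = el he hk p 0 12 63 18 := by
  rw [tgenD, s4_val, gy]
  apply comm'_eq
  rw [el_mul1 (by norm_num), el_mul0 (by norm_num), el_mul0 (by norm_num)]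
  apply el_eq27 <;> norm_num

lemma t6_val : tgenD (gx he hk p) (gy he hk p) 6 = el he hk p 0 18 27 9 := by
  rw [tgenD, s5_val, gy]
  apply comm'_eq
  rw [el_mul1 (by norm_num), el_mul0 (by norm_num), el_mul0 (by norm_num)]
  apply el_eq27 <;> norm_num

lemma t7_val : tgenD (gx he hk p) (gy he hk p) 7 = el he hk p 0 18 54 0 := by
  rw [tgenD, s6_val, gy]
  apply comm'_eq
  rw [el_mul1 (by norm_num), el_mul0 (by norm_num), el_mul0 (by norm_num)]
  apply el_eq27 <;> norm_num

lemma u_val : comm' (el he hk p 0 26 27 1) (el he hk p 0 25 24 24) = el he hk p 0 6 0 0 := by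
  apply comm'_eq
  rw [el_mul0 (by norm_num), el_mul0 (by norm_num), el_mul0 (by norm_num)]
  apply el_eq27 <;> norm_num

lemma x_pow (m : ℕ) : gx he hk p ^ m = el he hk p m 0 0 0 := by
  induction m with
  | zero => simp [el_one]
  | succ m ih =>
    rw [pow_succ, ih, gx, el_mul1 (by norm_num)]
    apply el_eq27 <;> norm_num

lemma el_three (n t a b : ℤ) (h : n = 3 ^ e * t) (hp : p * p = 1) :
    el he hk p n 0 a b = el he hk p 0 (p * t) a b := by
  refine TwGp.ext (tr_eq e k ⟨0, ?_⟩ ⟨0, by ring⟩ ⟨0, by ring⟩)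
  subst h
  linear_combination (- 3 ^ e * t) * hp

lemma w_val (hp : p * p = 1) : gx he hk p ^ 3 ^ e = el he hk p 0 p 0 0 := by
  rw [x_pow, el_three _ 1 0 0 (by push_cast; ring) hp, mul_one]

lemma mem_of_add {G : Type*} [Group G] (H : Subgroup G) (f : ℤ → G)
    (hf : ∀ a b, f (a + b) = f a * f b) (h1 : f 1 ∈ H) (n : ℤ) : f n ∈ H := by
  have h0 : f 0 = 1 := by
    have := hf 0 0
    simpa using this
  induction n with
  | zero => rw [h0]; exact H.one_mem
  | succ i hi => rw [hf]; exact H.mul_mem hi h1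
  | pred i hi =>
    have h := hf (-(i : ℤ) - 1) 1
    rw [sub_add_cancel] at h
    rw [h] at hi
    exact (H.mul_mem_cancel_right h1).1 hi

/-- A subgroup containing `s₂, s₃, s₇, t₃` contains the whole derived subgroup. -/
lemma mem_of_gens (H : Subgroup (GG e k he hk p))
    (h2 : el he hk p 0 26 27 1 ∈ H) (h3 : el he hk p 0 25 24 24 ∈ H)
    (h7 : el he hk p 0 9 54 0 ∈ H) (ht : el he hk p 0 2 78 24 ∈ H) (t a b : ℤ) :
    el he hk p 0 t (3 * a) b ∈ H := by
  have hq : el he hk p 0 4 54 0 ∈ H := by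
    have : el he hk p 0 2 78 24 = el he hk p 0 25 24 24 * el he hk p 0 4 54 0 := by
      rw [el_mul0 (by norm_num)]
      apply el_eq27 <;> norm_num
    rw [this] at ht
    exact (H.mul_mem_cancel_left h3).1 ht
  have h5 : el he hk p 0 5 0 0 ∈ H := by
    have : el he hk p 0 9 54 0 = el he hk p 0 4 54 0 * el he hk p 0 5 0 0 := by
      rw [el_mul0 (by norm_num)]
      apply el_eq27 <;> norm_num
    rw [this] at h7
    exact (H.mul_mem_cancel_left hq).1 h7
  have hW1 : el he hk p 0 1 0 0 ∈ H := by
    have := mem_of_add H (fun t => el he hk p 0 (5 * t) 0 0) (fun a b => by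
      rw [el_mul0 (by norm_num)]
      apply el_eq27 <;> ring_nf <;> norm_num) (by simpa using h5) 11
    convert this using 1
    apply el_eq27 <;> norm_num
  have hW : ∀ t : ℤ, el he hk p 0 t 0 0 ∈ H := mem_of_add H (fun t => el he hk p 0 t 0 0)
    (fun a b => by
      rw [el_mul0 (by norm_num)]
      apply el_eq27 <;> ring_nf <;> norm_num) hW1
  have h54 : el he hk p 0 0 54 0 ∈ H := by
    have : el he hk p 0 0 54 0 = el he hk p 0 9 54 0 * el he hk p 0 (-9) 0 0 := by
      rw [el_mul0 (by norm_num)]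
      apply el_eq27 <;> norm_num
    rw [this]
    exact H.mul_mem h7 (hW _)
  have h27 : el he hk p 0 26 27 0 ∈ H := by
    have : el he hk p 0 26 27 0 =
        el he hk p 0 0 54 0 * el he hk p 0 0 54 0 * el he hk p 0 26 0 0 := by
      rw [el_mul0 (by norm_num), el_mul0 (by norm_num)]
      apply el_eq27 <;> norm_num
    rw [this]
    exact H.mul_mem (H.mul_mem h54 h54) (hW _)
  have hB1 : el he hk p 0 0 0 1 ∈ H := by
    have : el he hk p 0 26 27 1 = el he hk p 0 0 0 1 * el he hk p 0 26 27 0 := by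
      rw [el_mul0 (by norm_num)]
      apply el_eq27 <;> norm_num
    rw [this] at h2
    exact (H.mul_mem_cancel_right h27).1 h2
  have hB : ∀ b : ℤ, el he hk p 0 0 0 b ∈ H := mem_of_add H (fun b => el he hk p 0 0 0 b)
    (fun a b => by
      rw [el_mul0 (by norm_num)]
      apply el_eq27 <;> ring_nf <;> norm_num) hB1
  have h24 : el he hk p 0 0 24 0 ∈ H := by
    have : el he hk p 0 25 24 24 =
        el he hk p 0 0 24 0 * el he hk p 0 0 0 24 * el he hk p 0 (25 - 576) 0 0 := by
      rw [el_mul0 (by norm_num), el_mul0 (by norm_num)]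
      apply el_eq27 <;> norm_num
    rw [this] at h3
    exact (H.mul_mem_cancel_right (hB _)).1 ((H.mul_mem_cancel_right (hW _)).1 h3)
  have hA1 : el he hk p 0 0 3 0 ∈ H := by
    have := mem_of_add H (fun t => el he hk p 0 0 (24 * t) 0) (fun a b => by
      rw [el_mul0 (by simp only [zero_add]; exact ⟨8 * b, by ring⟩)]
      apply el_eq27 <;> ring_nf <;> norm_num) (by simpa using h24) 17
    convert this using 1
    apply el_eq27 <;> norm_num
  have hA : ∀ a : ℤ, el he hk p 0 0 (3 * a) 0 ∈ H :=
    mem_of_add H (fun t => el he hk p 0 0 (3 * t) 0) (fun a b => by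
      rw [el_mul0 (by simp)]
      apply el_eq27 <;> ring_nf <;> norm_num) (by simpa using hA1)
  have : el he hk p 0 t (3 * a) b =
      el he hk p 0 0 (3 * a) 0 * el he hk p 0 0 0 b * el he hk p 0 (t - 3 * a * b) 0 0 := by
    rw [el_mul0 (by norm_num), el_mul0 (by norm_num)]
    refine el_eq27 (by norm_num) ⟨0, by ring⟩ ⟨a * b, by ring⟩ ⟨0, by ring⟩
  rw [this]
  exact H.mul_mem (H.mul_mem (hA _) (hB _)) (hW _)

end Computations

section Structure

variable {e k : ℕ} {he : 1 ≤ e} {hk : k ≤ 3} {p : ℤ}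

/-- reduction of the first coordinate modulo `3^e` -/
def Re (e k : ℕ) : ZMod (3 ^ (e + k)) →+ ZMod (3 ^ e) :=
  sc _ _ 1 (by
    rw [one_mul]
    exact_mod_cast pow_dvd_pow 3 (Nat.le_add_right e k))

lemma Re_int (e k : ℕ) (x : ℤ) : Re e k (x : ZMod (3 ^ (e + k))) = (x : ZMod (3 ^ e)) := by
  rw [Re, sc_int]; push_cast; ring

lemma three_pow_zero : (3 : ZMod (3 ^ e)) ^ e = 0 := by
  have := ZMod.natCast_self (3 ^ e)
  exact_mod_cast this

/-- additive version of the abelianization map -/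
def fadd (e k : ℕ) : EE e k →+ ZMod (3 ^ e) × ZMod 3 :=
  AddMonoidHom.mk' (fun v => (Re e k v.1, R3 v.2.1)) (by
    intro a b; simp only [Prod.fst_add, Prod.snd_add, map_add, Prod.mk_add_mk])

lemma fadd_tr (n a b : ℤ) : fadd e k (tr e k n a b) = ((n : ZMod (3 ^ e)), (a : ZMod 3)) := by
  simp [fadd, tr, Re_int, R3_int]

lemma fadd_z (v : EE e k) : fadd e k (zz e k hk p v) = fadd e k v := by
  obtain ⟨n, a, b, rfl⟩ := tr_surj e k v
  rw [zz_tr, fadd_tr, fadd_tr]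
  refine Prod.ext ?_ ?_
  · push_cast; rw [three_pow_zero]; ring
  · exact int3_eq ⟨8 * b, by ring⟩

lemma fadd_k (t : ZMod 27) : fadd e k (kk e k hk p t) = 0 := by
  obtain ⟨t, rfl⟩ := ZMod.intCast_surjective t
  rw [kk_int, fadd_tr]
  refine Prod.ext ?_ ?_
  · push_cast; rw [three_pow_zero]; simp
  · rw [int3_eq (b := 0) ⟨-9 * t, by ring⟩]; simp

lemma fadd_act (m : ZMod 3) (v : EE e k) : fadd e k ((DD e k he hk p).act m v) = fadd e k v := by
  have hz : ∀ w, fadd e k ((DD e k he hk p).z w) = fadd e k w := fun w => fadd_z w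
  rcases TwData.zmod3_cases m with rfl | rfl | rfl <;>
    simp [TwData.act_zero, TwData.act_one, TwData.act_two, hz]

/-- the abelianization map -/
def fab (he : 1 ≤ e) (hk : k ≤ 3) (p : ℤ) :
    GG e k he hk p →* Multiplicative (ZMod (3 ^ e) × ZMod 3) :=
  MonoidHom.mk' (fun g => Multiplicative.ofAdd (fadd e k g.val)) (by
    intro g h
    have hz : ∀ t, fadd e k ((DD e k he hk p).ka t) = 0 := fun w => fadd_k w
    rw [TwGp.mul_val, (fadd e k).map_add, (fadd e k).map_add, fadd_act, hz, add_zero, ofAdd_add])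

lemma fab_el (n t a b : ℤ) : fab he hk p (el he hk p n t a b) =
    Multiplicative.ofAdd ((n : ZMod (3 ^ e)), (a : ZMod 3)) := by
  change Multiplicative.ofAdd (fadd e k (tr e k _ _ _)) = _
  rw [fadd_tr]
  push_cast
  rw [three_pow_zero]
  simp

lemma fab_surj : Function.Surjective (fab he hk p) := by
  intro w
  obtain ⟨n, a⟩ := w
  obtain ⟨n, rfl⟩ := ZMod.intCast_surjective n
  obtain ⟨a, rfl⟩ := ZMod.intCast_surjective a
  exact ⟨el he hk p n 0 a 0, fab_el _ _ _ _⟩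

lemma ker_form (hp : p * p = 1) {g : GG e k he hk p} (hg : g ∈ (fab he hk p).ker) :
    ∃ t a b : ℤ, g = el he hk p 0 t (3 * a) b := by
  obtain ⟨n, a, b, rfl⟩ := el_surj0 g
  rw [MonoidHom.mem_ker, fab_el] at hg
  have hg' : ((n : ZMod (3 ^ e)), (a : ZMod 3)) = 0 := hg
  have h1 : (n : ZMod (3 ^ e)) = 0 := congrArg Prod.fst hg'
  have h2 : (a : ZMod 3) = 0 := congrArg Prod.snd hg'
  rw [ZMod.intCast_zmod_eq_zero_iff_dvd] at h1
  obtain ⟨c, rfl⟩ := (ZMod.intCast_zmod_eq_zero_iff_dvd a 3).1 h2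
  obtain ⟨d, hd⟩ := h1
  exact ⟨p * d, c, b, el_three _ d _ _ (by rw [hd]; push_cast; ring) hp⟩

open commutatorElement in
lemma comm'_mem {G : Type*} [Group G] (a b : G) : comm' a b ∈ commutator G := by
  have h : comm' a b = ⁅a⁻¹, b⁻¹⁆ := by simp [comm', commutatorElement_def]
  rw [h, commutator_def]
  exact Subgroup.commutator_mem_commutator (Subgroup.mem_top _) (Subgroup.mem_top _)

lemma el_mem_commutator (t a b : ℤ) : el he hk p 0 t (3 * a) b ∈ commutator (GG e k he hk p) := by
  apply mem_of_gens
  · rw [← s2_val, sgen]; exact comm'_mem _ _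
  · rw [← s3_val, sgen]; exact comm'_mem _ _
  · rw [← s7_val, sgen]; exact comm'_mem _ _
  · rw [← t3_val, tgenD]; exact comm'_mem _ _

lemma ker_eq (hp : p * p = 1) : (fab he hk p).ker = commutator (GG e k he hk p) := by
  apply le_antisymm
  · intro g hg
    obtain ⟨t, a, b, rfl⟩ := ker_form hp hg
    exact el_mem_commutator t a b
  · exact Abelianization.commutator_subset_ker _

lemma ab_equiv (hp : p * p = 1) : Nonempty (Abelianization (GG e k he hk p) ≃*
    Multiplicative (ZMod (3 ^ e) × ZMod 3)) :=
  ⟨(QuotientGroup.quotientMulEquivOfEq (ker_eq hp).symm).trans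
    (QuotientGroup.quotientKerEquivOfSurjective _ fab_surj)⟩

lemma closure_top :
    Subgroup.closure {gx he hk p, gy he hk p} = (⊤ : Subgroup (GG e k he hk p)) := by
  set H := Subgroup.closure {gx he hk p, gy he hk p} with hH
  have hx : gx he hk p ∈ H := Subgroup.subset_closure (by simp)
  have hy : gy he hk p ∈ H := Subgroup.subset_closure (by simp)
  have hc : ∀ a ∈ H, ∀ b ∈ H, comm' a b ∈ H := fun a ha b hb =>
    H.mul_mem (H.mul_mem (H.mul_mem (H.inv_mem ha) (H.inv_mem hb)) ha) hb
  have h2 : sgen (gx he hk p) (gy he hk p) 2 ∈ H := hc _ hy _ hx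
  have h3 : sgen (gx he hk p) (gy he hk p) 3 ∈ H := hc _ h2 _ hx
  have h4 : sgen (gx he hk p) (gy he hk p) 4 ∈ H := hc _ h3 _ hx
  have h5 : sgen (gx he hk p) (gy he hk p) 5 ∈ H := hc _ h4 _ hx
  have h6 : sgen (gx he hk p) (gy he hk p) 6 ∈ H := hc _ h5 _ hx
  have h7 : sgen (gx he hk p) (gy he hk p) 7 ∈ H := hc _ h6 _ hx
  have ht : tgenD (gx he hk p) (gy he hk p) 3 ∈ H := hc _ h2 _ hy
  rw [s2_val] at h2
  rw [s3_val] at h3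
  rw [s7_val] at h7
  rw [t3_val] at ht
  have key := mem_of_gens H h2 h3 h7 ht
  have c0 : ∀ (n : ℕ) (t a b : ℤ), el he hk p n t (3 * a) b ∈ H := by
    intro n t a b
    have : el he hk p n t (3 * a) b = gx he hk p ^ n * el he hk p 0 t (3 * a) b := by
      rw [x_pow, el_mul0 (by simp)]
      apply el_eq27 <;> ring_nf <;> norm_num
    rw [this]
    exact H.mul_mem (H.pow_mem hx n) (key t a b)
  have c2 : ∀ (n : ℕ) (t a b : ℤ), el he hk p n t (3 * a + 2) b ∈ H := by
    intro n t a b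
    rw [← H.mul_mem_cancel_right hy, gy, el_mul1 (by norm_num)]
    have := c0 n (t + b + 0 + ((3 * a + 2 + 24 * b) * 0 - (3 * a + 2 - 2 * b) * 1))
      (a + 8 * b + 1 + 9 * (3 * a + 2 - 2 * b)) (3 * a + 2 - 2 * b + 0)
    convert this using 2 <;> ring
  have c1 : ∀ (n : ℕ) (t a b : ℤ), el he hk p n t (3 * a + 1) b ∈ H := by
    intro n t a b
    rw [← H.mul_mem_cancel_right hy, gy, el_mul1 (by norm_num)]
    have := c2 n (t + b + 0 + ((3 * a + 1 + 24 * b) * 0 - (3 * a + 1 - 2 * b) * 1))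
      (a + 8 * b + 9 * (3 * a + 1 - 2 * b)) (3 * a + 1 - 2 * b + 0)
    convert this using 2 <;> ring
  rw [eq_top_iff]
  rintro ⟨n, a, b⟩ -
  obtain ⟨n, rfl⟩ := ZMod.natCast_zmod_surjective n
  obtain ⟨a, rfl⟩ := ZMod.intCast_surjective a
  obtain ⟨b, rfl⟩ := ZMod.intCast_surjective b
  have hel : (⟨((n : ZMod (3 ^ (e + k))), (a : ZMod 81), (b : ZMod 27))⟩ : GG e k he hk p)
      = el he hk p n 0 a b := by
    simp [el, tr]
  rw [hel]
  have ha : a = 3 * (a / 3) ∨ a = 3 * (a / 3) + 1 ∨ a = 3 * (a / 3) + 2 := by omega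
  rcases ha with h | h | h <;> rw [h]
  · exact c0 _ _ _ _
  · exact c1 _ _ _ _
  · exact c2 _ _ _ _

/-- underlying equivalence -/
def valEquiv : GG e k he hk p ≃ EE e k := ⟨fun g => g.val, fun v => ⟨v⟩, fun _ => rfl, fun _ => rfl⟩

instance : Finite (GG e k he hk p) :=
  haveI : NeZero (3 ^ (e + k)) := ⟨by positivity⟩
  Finite.of_equiv _ valEquiv.symm

lemma card_GG : Nat.card (GG e k he hk p) = 3 ^ (7 + k + e) := by
  rw [Nat.card_congr valEquiv, Nat.card_prod, Nat.card_prod]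
  simp only [Nat.card_zmod]
  rw [show (81 : ℕ) * 27 = 3 ^ 7 by norm_num, ← pow_add]
  congr 1; omega

/-- additive version of sigma -/
def ss (e k : ℕ) (hk : k ≤ 3) (p : ℤ) : EE e k →+ EE e k :=
  AddMonoidHom.mk' (fun v => (-v.1 - PP e k hk p v.2.2, -v.2.1 - A24 v.2.2, v.2.2)) (by
    intro v w
    refine Prod.ext ?_ (Prod.ext ?_ ?_)
    · simp only [Prod.fst_add, Prod.snd_add, map_add]; abel
    · simp only [Prod.fst_add, Prod.snd_add, map_add]; abel
    · simp only [Prod.snd_add])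

lemma ss_tr (n a b : ℤ) :
    ss e k hk p (tr e k n a b) = tr e k (-n - p * 3 ^ e * b) (-a - 24 * b) b := by
  simp [ss, tr, PP_int, A24_int]

lemma ss_z (v : EE e k) : ss e k hk p (zz e k hk p v) = zz e k hk p (zz e k hk p (ss e k hk p v)) := by
  obtain ⟨n, a, b, rfl⟩ := tr_surj e k v
  simp only [ss_tr, zz_tr]
  refine tr_eq e k ?_ ?_ ?_
  · convert dvd_Q e k hk (p * b) using 1
    ring
  · exact ⟨8 * b, by ring⟩
  · exact ⟨-2 * b, by ring⟩

lemma ss_ss (v : EE e k) : ss e k hk p (ss e k hk p v) = v := by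
  obtain ⟨n, a, b, rfl⟩ := tr_surj e k v
  simp only [ss_tr]
  exact tr_eq e k ⟨0, by ring⟩ ⟨0, by ring⟩ ⟨0, by ring⟩

lemma ss_om (v w : EE e k) : oo e k (ss e k hk p v) (ss e k hk p w) = - oo e k v w := by
  obtain ⟨n, a, b, rfl⟩ := tr_surj e k v
  obtain ⟨n', a', b', rfl⟩ := tr_surj e k w
  simp only [ss_tr, oo_tr]
  push_cast; ring

lemma ss_k (t : ZMod 27) : ss e k hk p (kk e k hk p t) = - kk e k hk p t := by
  rw [← map_neg]
  obtain ⟨t, rfl⟩ := ZMod.intCast_surjective t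
  rw [← Int.cast_neg]
  simp only [kk_int, ss_tr]
  exact tr_eq e k ⟨0, by ring⟩ ⟨0, by ring⟩ ⟨0, by ring⟩

lemma ss_c (v : EE e k) : cc e k he (ss e k hk p v) = - cc e k he v := by
  obtain ⟨n, a, b, rfl⟩ := tr_surj e k v
  simp only [ss_tr, cc_tr]
  rw [← Int.cast_neg]
  obtain ⟨c, hc⟩ := dvd_three_pow he
  exact int3_eq ⟨-(p * c * b) - 8 * b, by rw [hc]; ring⟩

lemma ss_f (v : EE e k) : fadd e k (ss e k hk p v) = - fadd e k v := by
  obtain ⟨n, a, b, rfl⟩ := tr_surj e k v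
  simp only [ss_tr, fadd_tr]
  refine Prod.ext ?_ ?_
  · push_cast; rw [three_pow_zero]; simp
  · simp only [Prod.neg_mk, ← Int.cast_neg]
    exact int3_eq ⟨-8 * b, by ring⟩

lemma ss_act (m : ZMod 3) (v : EE e k) : ss e k hk p ((DD e k he hk p).act m v) =
    (DD e k he hk p).act (-m) (ss e k hk p v) := by
  have hz : ∀ w, ss e k hk p ((DD e k he hk p).z w) =
    (DD e k he hk p).z ((DD e k he hk p).z (ss e k hk p w)) := fun w => ss_z w
  have n1 : -(1 : ZMod 3) = 2 := by decide
  have n2 : -(2 : ZMod 3) = 1 := by decide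
  rcases TwData.zmod3_cases m with rfl | rfl | rfl <;>
    simp [TwData.act_zero, TwData.act_one, TwData.act_two, hz, n1, n2, TwData.hz]

/-- sigma -/
def sig (he : 1 ≤ e) (hk : k ≤ 3) (p : ℤ) : GG e k he hk p ≃* GG e k he hk p where
  toFun g := ⟨ss e k hk p g.val⟩
  invFun g := ⟨ss e k hk p g.val⟩
  left_inv g := TwGp.ext (ss_ss g.val)
  right_inv g := TwGp.ext (ss_ss g.val)
  map_mul' g h := by
    refine TwGp.ext ?_
    rw [TwGp.mul_val, TwGp.mul_val]
    have hc : (DD e k he hk p).ch (ss e k hk p h.val) = - (DD e k he hk p).ch h.val := ss_c h.val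
    have hka : ∀ t, ss e k hk p ((DD e k he hk p).ka t) = - (DD e k he hk p).ka t :=
      fun t => ss_k t
    have ho : ∀ v w, (DD e k he hk p).om (ss e k hk p v) (ss e k hk p w) =
      - (DD e k he hk p).om v w := fun v w => ss_om v w
    simp only [hc]
    rw [map_add, map_add, hka, ← ss_act, ho, map_neg]

lemma sigma_GG (hp : p * p = 1) : IsSigmaGroup (GG e k he hk p) := by
  refine ⟨sig he hk p, fun g => ?_⟩
  have h1 : sig he hk p g * g ∈ commutator (GG e k he hk p) := by
    rw [← ker_eq hp, MonoidHom.mem_ker, map_mul]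
    change Multiplicative.ofAdd (fadd e k (ss e k hk p g.val)) *
      Multiplicative.ofAdd (fadd e k g.val) = 1
    rw [ss_f, ← ofAdd_add, neg_add_cancel, ofAdd_zero]
  rw [eq_inv_iff_mul_eq_one, ← map_mul]
  exact (QuotientGroup.eq_one_iff _).2 h1

end Structure

section Final

/-- reduction of the first coordinate -/
def R31 (e : ℕ) : ZMod (3 ^ (e + 3)) →+ ZMod (3 ^ (e + 1)) :=
  sc _ _ 1 (by
    rw [one_mul]
    exact_mod_cast pow_dvd_pow 3 (Nat.add_le_add_left (by decide : 1 ≤ 3) e))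

lemma R31_int (e : ℕ) (x : ℤ) : R31 e (x : ZMod (3 ^ (e + 3))) = (x : ZMod (3 ^ (e + 1))) := by
  rw [R31, sc_int]; push_cast; ring

/-- reduction -/
def rr (e : ℕ) : EE e 3 →+ EE e 1 :=
  AddMonoidHom.mk' (fun v => (R31 e v.1, v.2)) (by
    intro a b; simp only [Prod.fst_add, Prod.snd_add, map_add, Prod.mk_add_mk])

lemma rr_tr (e : ℕ) (n a b : ℤ) : rr e (tr e 3 n a b) = tr e 1 n a b := by
  simp [rr, tr, R31_int]

lemma h33 : 3 ≤ 3 := le_refl 3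
lemma h13 : 1 ≤ 3 := by decide

variable {e : ℕ} {he : 1 ≤ e} {p : ℤ}

lemma rr_act (m : ZMod 3) (v : EE e 3) : rr e ((DD e 3 he h33 p).act m v) =
    (DD e 1 he h13 p).act m (rr e v) := by
  have hz : ∀ w, rr e ((DD e 3 he h33 p).z w) = (DD e 1 he h13 p).z (rr e w) := by
    intro w
    obtain ⟨n, a, b, rfl⟩ := tr_surj e 3 w
    change rr e (zz e 3 h33 p _) = zz e 1 h13 p _
    rw [zz_tr, rr_tr, rr_tr, zz_tr]
  rcases TwData.zmod3_cases m with rfl | rfl | rfl <;>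
    simp [TwData.act_zero, TwData.act_one, TwData.act_two, hz]

/-- the projection of `G` onto `M` -/
def phi (he : 1 ≤ e) (p : ℤ) : GG e 3 he h33 p →* GG e 1 he h13 p :=
  MonoidHom.mk' (fun g => ⟨rr e g.val⟩) (by
    intro g h
    refine TwGp.ext ?_
    rw [TwGp.mul_val, TwGp.mul_val]
    have hc : ∀ v, (DD e 1 he h13 p).ch (rr e v) = (DD e 3 he h33 p).ch v := by
      intro v
      obtain ⟨n, a, b, rfl⟩ := tr_surj e 3 v
      change cc e 1 he _ = cc e 3 he _
      rw [rr_tr, cc_tr, cc_tr]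
    have hka : ∀ t, rr e ((DD e 3 he h33 p).ka t) = (DD e 1 he h13 p).ka t := by
      intro t
      obtain ⟨t, rfl⟩ := ZMod.intCast_surjective t
      change rr e (kk e 3 h33 p _) = kk e 1 h13 p _
      rw [kk_int, kk_int, rr_tr]
    have ho : ∀ v w, (DD e 1 he h13 p).om (rr e v) (rr e w) = (DD e 3 he h33 p).om v w := by
      intro v w
      obtain ⟨n, a, b, rfl⟩ := tr_surj e 3 v
      obtain ⟨n', a', b', rfl⟩ := tr_surj e 3 w
      change oo e 1 _ _ = oo e 3 _ _
      rw [rr_tr, rr_tr, oo_tr, oo_tr]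
    simp only [hc]
    rw [map_add, map_add, hka, rr_act, ← ho, rr_act])

lemma phi_el (n t a b : ℤ) : phi he p (el he h33 p n t a b) = el he h13 p n t a b :=
  TwGp.ext (rr_tr e _ a b)

lemma phi_surj : Function.Surjective (phi he p) := by
  intro g
  obtain ⟨n, a, b, rfl⟩ := el_surj0 g
  exact ⟨el he h33 p n 0 a b, phi_el _ _ _ _⟩

lemma phi_ker_form (hp : p * p = 1) {g : GG e 3 he h33 p} (hg : g ∈ (phi he p).ker) :
    ∃ t : ℤ, g = el he h33 p 0 (3 * t) 0 0 := by
  obtain ⟨n, a, b, rfl⟩ := el_surj0 g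
  rw [MonoidHom.mem_ker, phi_el] at hg
  have hg' : tr e 1 (n + p * 3 ^ e * 0) a b = 0 := congrArg TwGp.val hg
  rw [mul_zero, add_zero] at hg'
  have h1 : (n : ZMod (3 ^ (e + 1))) = 0 := congrArg Prod.fst hg'
  have h2 : (a : ZMod 81) = 0 := congrArg (fun v => v.2.1) hg'
  have h3 : (b : ZMod 27) = 0 := congrArg (fun v => v.2.2) hg'
  rw [ZMod.intCast_zmod_eq_zero_iff_dvd] at h1
  have h2' := (ZMod.intCast_zmod_eq_zero_iff_dvd a 81).1 h2
  have h3' := (ZMod.intCast_zmod_eq_zero_iff_dvd b 27).1 h3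
  obtain ⟨d, hd⟩ := h1
  refine ⟨p * d, ?_⟩
  rw [el_three n (3 * d) a b (by rw [hd]; push_cast; ring) hp]
  exact el_eq27 rfl ⟨0, by ring⟩ (by simpa using h2') (by simpa using h3')

lemma derived_one (G : Type*) [Group G] : derivedSeries G 1 = commutator G := by
  simp [derivedSeries_succ, commutator_def]

lemma metab (hp : p * p = 1) : derivedSeries (GG e 1 he h13 p) 2 = ⊥ := by
  rw [derivedSeries_succ, derived_one, Subgroup.commutator_eq_bot_iff_le_centralizer]
  intro g hg
  rw [Subgroup.mem_centralizer_iff]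
  intro h hh
  have hh' : h ∈ commutator (GG e 1 he h13 p) := hh
  rw [← ker_eq hp] at hg hh'
  obtain ⟨t, a, b, rfl⟩ := ker_form hp hg
  obtain ⟨t', a', b', rfl⟩ := ker_form hp hh'
  rw [el_mul0 (by simp), el_mul0 (by simp)]
  exact el_eq (by ring) ⟨2 * (a' * b - b' * a), by ring⟩ ⟨-2 * (a' * b - b' * a), by ring⟩
    ⟨0, by ring⟩

open commutatorElement in
lemma u_mem : el he h33 p 0 6 0 0 ∈ derivedSeries (GG e 3 he h33 p) 2 := by
  rw [derivedSeries_succ, derived_one, ← u_val]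
  have h : ∀ a b : GG e 3 he h33 p, comm' a b = ⁅a⁻¹, b⁻¹⁆ := by
    intro a b
    simp [comm', commutatorElement_def]
  rw [h]
  apply Subgroup.commutator_mem_commutator
  · exact inv_mem (el_mem_commutator (he := he) (hk := h33) (p := p) 26 9 1)
  · exact inv_mem (el_mem_commutator (he := he) (hk := h33) (p := p) 25 8 24)

lemma phi_ker (hp : p * p = 1) : (phi he p).ker = derivedSeries (GG e 3 he h33 p) 2 := by
  apply le_antisymm
  · intro g hg
    obtain ⟨t, rfl⟩ := phi_ker_form hp hg
    have := mem_of_add (derivedSeries (GG e 3 he h33 p) 2) (fun t => el he h33 p 0 (6 * t) 0 0)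
      (fun a b => by
        rw [el_mul0 (by norm_num)]
        apply el_eq27 <;> ring_nf <;> norm_num) (by simpa using u_mem) (5 * t)
    convert this using 1
    exact el_eq27 rfl ⟨-t, by ring⟩ ⟨0, by ring⟩ ⟨0, by ring⟩
  · intro g hg
    have h1 : phi he p g ∈ (derivedSeries (GG e 3 he h33 p) 2).map (phi he p) :=
      Subgroup.mem_map_of_mem _ hg
    have h2 := map_derivedSeries_le_derivedSeries (phi he p) 2 h1
    rw [metab hp, Subgroup.mem_bot] at h2
    exact h2

lemma derived_three (hp : p * p = 1) : derivedSeries (GG e 3 he h33 p) 3 = ⊥ := by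
  rw [derivedSeries_succ, ← phi_ker hp, Subgroup.commutator_eq_bot_iff_le_centralizer]
  intro g hg
  rw [Subgroup.mem_centralizer_iff]
  intro h hh
  obtain ⟨t, rfl⟩ := phi_ker_form hp hg
  obtain ⟨t', rfl⟩ := phi_ker_form hp hh
  rw [el_mul0 (by simp), el_mul0 (by simp)]
  exact el_eq27 (by ring) ⟨0, by ring⟩ ⟨0, by ring⟩ ⟨0, by ring⟩

lemma derived_two_ne (hp : p * p = 1) : derivedSeries (GG e 3 he h33 p) 2 ≠ ⊥ := by
  intro h
  have h1 := u_mem (e := e) (he := he) (p := p)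
  rw [h, Subgroup.mem_bot] at h1
  have hg' : tr e 3 (0 + p * 3 ^ e * 6) 0 0 = 0 := congrArg TwGp.val h1
  have h2 : ((0 + p * 3 ^ e * 6 : ℤ) : ZMod (3 ^ (e + 3))) = 0 := congrArg Prod.fst hg'
  rw [ZMod.intCast_zmod_eq_zero_iff_dvd] at h2
  obtain ⟨c, hc⟩ := h2
  push_cast at hc
  rw [pow_add] at hc
  have h3 : (3 : ℤ) ^ e * (p * 6) = 3 ^ e * (27 * c) := by linear_combination hc
  have h4 := mul_left_cancel₀ (by positivity : (3 : ℤ) ^ e ≠ 0) h3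
  rcases mul_self_eq_one_iff.1 hp with rfl | rfl <;> omega

end Final

theorem stmt13 (e i : ℕ) (he : 7 ≤ e) (hi : i = 2 ∨ i = 3) :
    ∃ (M : Type) (_ : Group M) (_ : Finite M) (x y : M),
      Subgroup.closure {x, y} = ⊤ ∧
      Nat.card M = 3 ^ (8 + e) ∧
      IsMetabelian M ∧
      IsSigmaGroup M ∧
      (x ^ 3 ^ e) ^ 3 = 1 ∧
      y ^ 3 = sgen x y 7 ∧
      sgen x y 2 ^ 3 = sgen x y 4 ^ 2 * sgen x y 5 ∧
      sgen x y 3 ^ 3 = sgen x y 5 ^ 2 * sgen x y 6 ∧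
      sgen x y 4 ^ 3 = sgen x y 6 ^ 2 * sgen x y 7 ∧
      sgen x y 5 ^ 3 = sgen x y 7 ^ 2 ∧
      tgenD x y 3 = sgen x y 3 * sgen x y 7 * (x ^ 3 ^ e) ^ (i - 1) ∧
      tgenD x y 4 = sgen x y 4 ∧
      tgenD x y 5 = sgen x y 5 ∧
      tgenD x y 6 = sgen x y 6 ∧
      tgenD x y 7 = sgen x y 7 ∧
      Nonempty (Abelianization M ≃* Multiplicative (ZMod (3 ^ e) × ZMod 3)) ∧
      ∃ (G : Type) (_ : Group G) (_ : Finite G),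
        Nat.card G = 3 ^ (10 + e) ∧
        Nonempty (Abelianization G ≃* Multiplicative (ZMod (3 ^ e) × ZMod 3)) ∧
        IsSigmaGroup G ∧
        derivedSeries G 2 ≠ ⊥ ∧
        derivedSeries G 3 = ⊥ ∧
        ∃ φ : G →* M, Function.Surjective φ ∧ φ.ker = derivedSeries G 2 := by
  have he1 : 1 ≤ e := by omega
  obtain ⟨p, hp, hpi⟩ : ∃ p : ℤ, p * p = 1 ∧ (3 : ℤ) ∣ p * ((i - 1 : ℕ) : ℤ) - 1 := by
    rcases hi with rfl | rfl
    · exact ⟨1, by norm_num, by norm_num⟩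
    · exact ⟨-1, by norm_num, by norm_num⟩
  have hw : ∀ m : ℕ, el he1 h13 p 0 p 0 0 ^ m = el he1 h13 p 0 (p * m) 0 0 := by
    intro m
    induction m with
    | zero => simp [el_one]
    | succ m ih =>
      rw [pow_succ, ih, el_mul0 (by norm_num)]
      exact el_eq27 (by ring) ⟨0, by push_cast; ring⟩ ⟨0, by ring⟩ ⟨0, by ring⟩
  refine ⟨GG e 1 he1 h13 p, inferInstance, inferInstance, gx he1 h13 p, gy he1 h13 p,
    closure_top, card_GG, metab hp, sigma_GG hp, ?_, ?_, ?_, ?_, ?_, ?_, ?_, ?_, ?_, ?_, ?_,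
    ab_equiv hp, GG e 3 he1 h33 p, inferInstance, inferInstance, card_GG, ab_equiv hp,
    sigma_GG hp, derived_two_ne hp, derived_three hp, phi he1 p, phi_surj, phi_ker hp⟩
  · rw [w_val hp, hw, ← el_one]
    exact el_eq rfl ⟨p, by push_cast; ring⟩ ⟨0, by ring⟩ ⟨0, by ring⟩
  · rw [s7_val, gy, pow_succ, pow_two, el_mul1 (by norm_num), el_mul1 (by norm_num)]
    apply el_eq <;> norm_num
  · rw [s2_val, s4_val, s5_val, pow_succ, pow_two, pow_two, el_mul0 (by norm_num),
      el_mul0 (by norm_num), el_mul0 (by norm_num), el_mul0 (by norm_num)]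
    apply el_eq <;> norm_num
  · rw [s3_val, s5_val, s6_val, pow_succ, pow_two, pow_two, el_mul0 (by norm_num),
      el_mul0 (by norm_num), el_mul0 (by norm_num), el_mul0 (by norm_num)]
    apply el_eq <;> norm_num
  · rw [s4_val, s6_val, s7_val, pow_succ, pow_two, pow_two, el_mul0 (by norm_num),
      el_mul0 (by norm_num), el_mul0 (by norm_num), el_mul0 (by norm_num)]
    apply el_eq <;> norm_num
  · rw [s5_val, s7_val, pow_succ, pow_two, pow_two, el_mul0 (by norm_num),
      el_mul0 (by norm_num), el_mul0 (by norm_num)]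
    apply el_eq <;> norm_num
  · rw [w_val hp, hw, t3_val, s3_val, s7_val, el_mul0 (by norm_num), el_mul0 (by norm_num)]
    obtain ⟨c, hc⟩ := hpi
    refine el_eq (by norm_num) ⟨421 - c, ?_⟩ (by norm_num) (by norm_num)
    linear_combination -hc
  · rw [t4_val, s4_val]
    apply el_eq <;> norm_num
  · rw [t5_val, s5_val]
    apply el_eq <;> norm_num
  · rw [t6_val, s6_val]
  · rw [t7_val, s7_val]
    apply el_eq <;> norm_num
end

section
/- For every integer e ≥ 7 and each i ∈ {2,3}, there exists a finite metabelian σ-group M of order 3^{8+e}, generated by two elements x and y satisfying w^3 = 1, y^3 = s₇^2, s_j^3 = s_{j+2}^2 s_{j+3} for j = 2,3,4, s₅^3 = s₇^2, t₃ = s₃ s₇ w^{i-1}, and t_j = s_j for j = 4,…,7, whose abelianization is isomorphic to (ZMod (3^e)) × (ZMod 3); moreover there exists a finite group G of order 3^{10+e} with the same abelianization, admitting a σ-automorphism, with second derived subgroup nontrivial and third derived subgroup trivial (derived length exactly 3), such that G/G'' is isomorphic to M. -/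
namespace D5

set_option linter.unusedVariables false
set_option linter.unusedSimpArgs false

/-- The additive group of `ℤ[ω]/π⁷`, an element `(a, b)` standing for `a + b π`, `π = ω - 1`. -/
abbrev R := ZMod 81 × ZMod 27

/-- Multiplication by three from `ℤ/27` to `ℤ/81`. -/
def tt : ZMod 27 →+ ZMod 81 where
  toFun b := 3 * (b.val : ZMod 81)
  map_zero' := by decide
  map_add' := by decide +kernel

/-- Reduction from `ℤ/81` to `ℤ/27`. -/
def pp : ZMod 81 →+* ZMod 27 := ZMod.castHom (by norm_num) (ZMod 27)

/-- Reduction from `ℤ/81` to `ℤ/3`. -/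
def ee : ZMod 81 →+* ZMod 3 := ZMod.castHom (by norm_num) (ZMod 3)

lemma pp_tt : ∀ b, pp (tt b) = 3 * b := by decide +kernel
lemma ee_tt : ∀ b, ee (tt b) = 0 := by decide +kernel

/-- Multiplication by `ω`. -/
def om : R →+ R where
  toFun z := (z.1 - tt z.2, pp z.1 - 2 * z.2)
  map_zero' := by simp
  map_add' z z' := by
    ext
    · simp; ring
    · simp; ring

/-- Multiplication by `1 - 9 √-3`. -/
def th : R →+ R where
  toFun z := (55 * z.1 + 18 * tt z.2, 9 * pp z.1 + z.2)
  map_zero' := by simp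
  map_add' z z' := by
    ext
    · simp; ring
    · simp; ring

/-- Minus the complex conjugation. -/
def ta : R →+ R where
  toFun z := (- z.1 + tt z.2, z.2)
  map_zero' := by simp
  map_add' z z' := by
    ext
    · simp; ring
    · simp

/-- The hom `(th ^ j) ∘ (om ^ m)`. -/
def act (j m : ZMod 3) : R →+ R :=
  AddMonoidHom.comp (match j with | 0 => AddMonoidHom.id R | 1 => th | 2 => th.comp th)
    (match m with | 0 => AddMonoidHom.id R | 1 => om | 2 => om.comp om)

lemma hom_eq_of {f g : R →+ R} (h1 : f (1, 0) = g (1, 0)) (h2 : f (0, 1) = g (0, 1)) :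
    f = g := by
  apply AddMonoidHom.ext
  intro z
  have hz : z = z.1.val • ((1, 0) : R) + z.2.val • ((0, 1) : R) := by
    ext <;> simp
  rw [hz, map_add, map_add, map_nsmul, map_nsmul, map_nsmul, map_nsmul, h1, h2]

lemma act_comp (j m j' m' : ZMod 3) (z : R) : act j m (act j' m' z) = act (j + j') (m + m') z := by
  have : (act j m).comp (act j' m') = act (j + j') (m + m') := by
    apply hom_eq_of
    · revert j m j' m'; decide +kernel
    · revert j m j' m'; decide +kernel
  exact DFunLike.congr_fun this z

lemma act_zero (z : R) : act 0 0 z = z := rfl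

lemma ta_act (j m : ZMod 3) (z : R) : ta (act j m z) = act (-j) (-m) (ta z) := by
  have : ta.comp (act j m) = (act (-j) (-m)).comp ta := by
    apply hom_eq_of
    · revert j m; decide +kernel
    · revert j m; decide +kernel
  exact DFunLike.congr_fun this z

lemma ta_ta (z : R) : ta (ta z) = z := by
  have : ta.comp ta = AddMonoidHom.id R := by
    apply hom_eq_of <;> decide +kernel
  exact DFunLike.congr_fun this z

/-- The determinant form. -/
def det (z z' : R) : ZMod 27 := pp z.1 * z'.2 - z.2 * pp z'.1

lemma det_om (z z' : R) : det (om z) (om z') = det z z' := by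
  simp [det, om, pp_tt]; ring

lemma det_th (z z' : R) : det (th z) (th z') = det z z' := by
  have h : (27 : ZMod 27) = 0 := by decide
  simp only [det, th, AddMonoidHom.coe_mk, ZeroHom.coe_mk, map_add, map_mul, map_ofNat, pp_tt]
  linear_combination (-16 * pp z.1 * z'.2 + 16 * z.2 * pp z'.1) * h

lemma det_ta (z z' : R) : det (ta z) (ta z') = - det z z' := by
  simp [det, ta, pp_tt]; ring

lemma det_act (j m : ZMod 3) (z z' : R) : det (act j m z) (act j m z') = det z z' := by
  fin_cases j <;> fin_cases m <;> simp [act, det_om, det_th]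

lemma ee_act (j m : ZMod 3) (z : R) : ee (act j m z).1 = ee z.1 := by
  have h1 (z : R) : ee (om z).1 = ee z.1 := by simp [om, ee_tt]
  have h2 (z : R) : ee (th z).1 = ee z.1 := by
    have h : (3 : ZMod 3) = 0 := by decide
    simp only [th, AddMonoidHom.coe_mk, ZeroHom.coe_mk, map_add, map_mul, map_ofNat, ee_tt]
    linear_combination (18 * ee z.1) * h
  fin_cases j <;> fin_cases m <;> simp [act, h1, h2]

lemma ee_ta (z : R) : ee (ta z).1 = - ee z.1 := by simp [ta, ee_tt]

lemma det_add_left (a b c : R) : det (a + b) c = det a c + det b c := by simp [det]; ring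
lemma det_add_right (a b c : R) : det a (b + c) = det a b + det a c := by simp [det]; ring
lemma det_self (a : R) : det a a = 0 := by simp [det]; ring
lemma det_neg_right (a b : R) : det a (-b) = - det a b := by simp [det]; ring
lemma det_neg_left (a b : R) : det (-a) b = - det a b := by simp [det]; ring

/-- The inclusion of `ℤ/27` into `ℤ/3^(e+3)`, multiplication by `3 ^ e`. -/
def iot (e : ℕ) : ZMod 27 →+ ZMod (3 ^ (e + 3)) :=
  ZMod.lift 27 ⟨(AddMonoidHom.mulLeft (3 ^ e)).comp (Int.castAddHom _), by
    have : ((3 ^ (e + 3) : ℕ) : ZMod (3 ^ (e + 3))) = 0 := ZMod.natCast_self _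
    push_cast at this
    simp
    rw [← this]; ring⟩

lemma iot_int (e : ℕ) (k : ℤ) : iot e (k : ZMod 27) = 3 ^ e * k := by
  simp [iot]

lemma iot_one (e : ℕ) : iot e 1 = 3 ^ e := by
  simpa using iot_int e 1

/-- Reduction to `ℤ/3`. -/
def red (e : ℕ) : ZMod (3 ^ (e + 3)) →+* ZMod 3 :=
  ZMod.castHom (dvd_pow_self 3 (by omega)) (ZMod 3)

/-- Reduction to `ℤ/3^e`. -/
def rede (e : ℕ) : ZMod (3 ^ (e + 3)) →+* ZMod (3 ^ e) :=
  ZMod.castHom (pow_dvd_pow 3 (by omega)) (ZMod (3 ^ e))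

lemma red_iot (e : ℕ) (he : e ≠ 0) (c : ZMod 27) : red e (iot e c) = 0 := by
  obtain ⟨k, rfl⟩ := ZMod.intCast_surjective c
  rw [iot_int]
  have : (3 : ZMod 3) = 0 := by decide
  simp [map_ofNat, this, he]

lemma rede_iot (e : ℕ) (c : ZMod 27) : rede e (iot e c) = 0 := by
  obtain ⟨k, rfl⟩ := ZMod.intCast_surjective c
  have : ((3 ^ e : ℕ) : ZMod (3 ^ e)) = 0 := ZMod.natCast_self _
  push_cast at this
  rw [iot_int]
  rw [map_mul, map_pow, map_ofNat, this, zero_mul]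

lemma exists_iot_of_rede (e : ℕ) (n : ZMod (3 ^ (e + 3))) (h : rede e n = 0) :
    ∃ c, n = iot e c := by
  obtain ⟨k, rfl⟩ := ZMod.intCast_surjective n
  rw [map_intCast, ZMod.intCast_zmod_eq_zero_iff_dvd] at h
  obtain ⟨c, rfl⟩ := h
  refine ⟨c, ?_⟩
  rw [iot_int]; push_cast; rfl

lemma iot_inj (e : ℕ) (c : ZMod 27) (h : iot e c = 0) : c = 0 := by
  obtain ⟨k, rfl⟩ := ZMod.intCast_surjective c
  rw [iot_int] at h
  have h' : ((3 ^ e * k : ℤ) : ZMod (3 ^ (e + 3))) = 0 := by push_cast; exact h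
  rw [ZMod.intCast_zmod_eq_zero_iff_dvd] at h' ⊢
  push_cast at h' ⊢
  rw [pow_add] at h'
  have := Int.dvd_of_mul_dvd_mul_left (a := 3 ^ e) (by positivity) h'
  simpa using this

/-- The underlying type of the group `G`; `κ` is the scaling of the determinant form. -/
@[ext] structure GG (e : ℕ) (κ : ZMod 27) where
  r : R
  n : ZMod (3 ^ (e + 3))

/-- The operator through which an element acts. -/
def uu {e : ℕ} {κ : ZMod 27} (g : GG e κ) : R →+ R := act (ee g.r.1) (red e g.n + ee g.r.1)

instance (e : ℕ) (κ : ZMod 27) : Mul (GG e κ) :=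
  ⟨fun g h => ⟨g.r + uu g h.r, g.n + h.n + iot e (κ * det g.r (uu g h.r))⟩⟩

instance (e : ℕ) (κ : ZMod 27) : One (GG e κ) := ⟨⟨0, 0⟩⟩

instance (e : ℕ) (κ : ZMod 27) : Inv (GG e κ) :=
  ⟨fun g => ⟨- act (- ee g.r.1) (- (red e g.n + ee g.r.1)) g.r, - g.n⟩⟩

variable {e : ℕ} {κ : ZMod 27}

lemma mul_r (g h : GG e κ) : (g * h).r = g.r + uu g h.r := rfl
lemma mul_n (g h : GG e κ) :
    (g * h).n = g.n + h.n + iot e (κ * det g.r (uu g h.r)) := rfl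
lemma one_r : (1 : GG e κ).r = 0 := rfl
lemma one_n : (1 : GG e κ).n = 0 := rfl
lemma inv_r (g : GG e κ) :
    (g⁻¹).r = - act (- ee g.r.1) (- (red e g.n + ee g.r.1)) g.r := rfl
lemma inv_n (g : GG e κ) : (g⁻¹).n = - g.n := rfl

lemma ee_mul (g h : GG e κ) : ee (g * h).r.1 = ee g.r.1 + ee h.r.1 := by
  rw [mul_r, Prod.fst_add, map_add, uu, ee_act]

lemma red_mul [NeZero e] (g h : GG e κ) : red e (g * h).n = red e g.n + red e h.n := by
  rw [mul_n, map_add, red_iot e (NeZero.ne e), add_zero, map_add]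

lemma uu_mul [NeZero e] (g h : GG e κ) (z : R) : uu (g * h) z = uu g (uu h z) := by
  rw [uu, uu, uu, act_comp, ee_mul, red_mul]
  congr 2
  abel

lemma uu_one (z : R) : uu (1 : GG e κ) z = z := by
  simp [uu, one_r, one_n, act_zero]

lemma det_uu (g : GG e κ) (a b : R) : det (uu g a) (uu g b) = det a b := det_act _ _ _ _

instance [NeZero e] : Group (GG e κ) where
    mul_assoc := (by
      intro a b c
      apply GG.ext
      · rw [mul_r, mul_r, mul_r, mul_r, uu_mul, map_add, add_assoc]
      · rw [mul_n, mul_n, mul_n, mul_n, mul_r, mul_r, uu_mul, map_add, det_add_left,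
          det_add_right, det_uu]
        simp only [mul_add, map_add]
        abel)
    one_mul := (by
      intro a
      apply GG.ext
      · rw [mul_r, uu_one, one_r, zero_add]
      · rw [mul_n, uu_one, one_r, one_n]
        simp [det])
    mul_one := (by
      intro a
      apply GG.ext
      · rw [mul_r, one_r, map_zero, add_zero]
      · rw [mul_n, one_r, one_n, map_zero]
        simp [det])
    inv_mul_cancel := (by
      intro a
      have h : uu a⁻¹ a.r = - (a⁻¹).r := by
        rw [uu, inv_r, inv_n, Prod.fst_neg, map_neg, map_neg, ee_act, neg_neg]
        congr 2
        abel
      apply GG.ext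
      · rw [mul_r, h, one_r, add_neg_cancel]
      · rw [mul_n, h, det_neg_right, det_self, inv_n, one_n]
        simp)

/-- Normal form of elements. -/
def mk (κ : ZMod 27) (r : R) (n : ZMod (3 ^ (e + 3))) (c : ZMod 27) : GG e κ := ⟨r, n + iot e c⟩

lemma red_mk [NeZero e] (r : R) (n : ZMod (3 ^ (e + 3))) (c : ZMod 27) :
    red e (mk κ r n c).n = red e n := by
  rw [mk, map_add, red_iot e (NeZero.ne e), add_zero]

lemma mk_mul [NeZero e] (r r' : R) (n n' : ZMod (3 ^ (e + 3))) (c c' : ZMod 27) :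
    mk κ r n c * mk κ r' n' c' =
      mk κ (r + act (ee r.1) (red e n + ee r.1) r') (n + n')
        (c + c' + κ * det r (act (ee r.1) (red e n + ee r.1) r')) := by
  apply GG.ext
  · rw [mul_r, uu, red_mk]; rfl
  · rw [mul_n, uu, red_mk]
    simp only [mk, map_add]
    abel

lemma mk_zero : mk κ 0 (0 : ZMod (3 ^ (e + 3))) 0 = (1 : GG e κ) := by
  apply GG.ext
  · rfl
  · simp [mk, one_n]

/-- Elements of the commutator subgroup. -/
def kk (e : ℕ) (κ : ZMod 27) (r : R) (c : ZMod 27) : GG e κ := mk κ r 0 c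

lemma kk_mul [NeZero e] (r r' : R) (h : ee r.1 = 0) (c c' : ZMod 27) :
    kk e κ r c * kk e κ r' c' = kk e κ (r + r') (c + c' + κ * det r r') := by
  rw [kk, kk, mk_mul, h, map_zero, add_zero, act_zero, add_zero]; rfl

lemma kk_zero : kk e κ 0 0 = 1 := mk_zero

lemma kk_pow [NeZero e] (r : R) (h : ee r.1 = 0) (c : ZMod 27) (k : ℕ) :
    kk e κ r c ^ k = kk e κ (k • r) (k • c) := by
  induction k with
  | zero => rw [pow_zero, zero_smul, zero_smul, kk_zero]
  | succ k ih =>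
    have h0 : det (k • r) r = 0 := by simp [det]; ring
    rw [pow_succ, ih, kk_mul, succ_nsmul, succ_nsmul, h0, mul_zero, add_zero]
    simp [h]

lemma kk_central [NeZero e] (c : ZMod 27) (g : GG e κ) : kk e κ 0 c * g = g * kk e κ 0 c := by
  apply GG.ext
  · rw [mul_r, mul_r]; simp [kk, mk, uu, red_iot e (NeZero.ne e), act_zero]
  · rw [mul_n, mul_n]; simp [kk, mk, uu, red_iot e (NeZero.ne e), act_zero, det]; abel

lemma comm_eq {G : Type*} [Group G] {a b c : G} (h : a * b = b * a * c) : comm' a b = c := by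
  rw [comm', mul_assoc, h]; group

/-- The generator `x`. -/
def xx (e : ℕ) (κ : ZMod 27) : GG e κ := mk κ 0 1 0

/-- The generator `y`; `l` is `1` or `-1`. -/
def yy (e : ℕ) (κ : ZMod 27) (l : ℤ) : GG e κ := mk κ (1, 0) (l * 3 ^ (e - 1)) 0

lemma xx_pow [NeZero e] (k : ℕ) : xx e κ ^ k = mk κ 0 k 0 := by
  induction k with
  | zero => simp [mk_zero]
  | succ k ih =>
    rw [pow_succ, ih, xx, mk_mul]
    simp [det]

lemma xx_pow_w [NeZero e] : xx e κ ^ 3 ^ e = kk e κ 0 1 := by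
  rw [xx_pow, kk, mk, mk]
  simp [iot_one]

lemma red_y (he : 7 ≤ e) (l : ℤ) : red e (l * 3 ^ (e - 1)) = 0 := by
  have : (3 : ZMod 3) = 0 := by decide
  have h : e - 1 ≠ 0 := by omega
  simp [map_ofNat, this, h]

/-- Commutator of an element of `K` with `x`. -/
lemma comm_kk_x [NeZero e] (r s : R) (c d : ZMod 27) (hr : ee r.1 = 0) (hs : ee s.1 = 0)
    (h : om r + act 0 1 s = r) (h' : c = c + d + κ * det (om r) (act 0 1 s)) :
    comm' (kk e κ r c) (xx e κ) = kk e κ s d := by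
  apply comm_eq
  have h1 : act (0 : ZMod 3) 1 r = om r := rfl
  rw [kk, xx, kk, mk_mul, mk_mul, mk_mul]
  have e1 : ee (om r).1 = 0 := by rw [← h1, ee_act, hr]
  simp only [hr, map_zero, map_one, Prod.fst_zero, zero_add, add_zero, h1, e1, h, ← h', act_zero]
  have h0 : det (0 : R) (om r) = 0 := by simp [det]
  have h2 : det r (0 : R) = 0 := by simp [det]
  simp only [h0, h2, mul_zero, add_zero, zero_add, ← h']

lemma comm_kk_y [NeZero e] (he : 7 ≤ e) (l : ℤ) (r s : R) (c d : ZMod 27) (hr : ee r.1 = 0) (hs : ee s.1 = 0)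
    (h : r + (1, 0) = (1, 0) + act 1 1 r + act 1 1 s)
    (h' : c + κ * det r (1, 0) = c + κ * det (1, 0) (act 1 1 r) + d
      + κ * det ((1, 0) + act 1 1 r) (act 1 1 s)) :
    comm' (kk e κ r c) (yy e κ l) = kk e κ s d := by
  apply comm_eq
  have e1 : ee ((1, 0) + act 1 1 r).1 = 1 := by
    rw [Prod.fst_add, map_add, ee_act, hr]; rfl
  rw [kk, yy, kk, mk_mul, mk_mul, mk_mul]
  simp only [hr, map_zero, map_one, Prod.fst_zero, zero_add, add_zero, red_y he, act_zero, e1, h, h']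

lemma comm_yx [NeZero e] (he : 7 ≤ e) (l : ℤ) (s : R) (d : ZMod 27) (hs : ee s.1 = 0)
    (h : (1, 0) = om (1, 0) + act 1 2 s)
    (h' : 0 = d + κ * det (om (1, 0)) (act 1 2 s)) :
    comm' (yy e κ l) (xx e κ) = kk e κ s d := by
  apply comm_eq
  have h1 : act (0 : ZMod 3) 1 = om := rfl
  have e1 : ee (om (1, 0)).1 = 1 := by decide +kernel
  have e2 : (1 : ZMod 3) + 1 = 2 := by decide
  rw [kk, xx, yy, mk_mul, mk_mul, mk_mul]
  have h0 : ∀ z, det (0 : R) z = 0 := by simp [det]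
  have h2 : ∀ z, det z (0 : R) = 0 := by simp [det]
  have h3 : red e (1 + l * 3 ^ (e - 1)) = 1 := by rw [map_add, red_y he, map_one, add_zero]
  simp only [h1, map_zero, map_one, Prod.fst_zero, zero_add, add_zero, red_y he, act_zero, e1, h3,
    e2, ← h, ← h', h0, h2, mul_zero]
  rw [add_comm]

/-- The condition on the parameters. -/
def Good (κ : ZMod 27) (l : ℤ) : Prop := (κ = 14 ∧ l = 1) ∨ (κ = 13 ∧ l = -1)

lemma s2_eq [NeZero e] (he : 7 ≤ e) {l : ℤ} (hg : Good κ l) :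
    sgen (xx e κ) (yy e κ l) 2 = kk e κ (57, 2) κ := by
  rw [sgen]
  rcases hg with ⟨rfl, rfl⟩ | ⟨rfl, rfl⟩ <;> apply comm_yx he <;> decide +kernel

lemma s3_eq [NeZero e] (he : 7 ≤ e) {l : ℤ} (hg : Good κ l) :
    sgen (xx e κ) (yy e κ l) 3 = kk e κ (78, 24) (3 * κ) := by
  rw [sgen, s2_eq he hg]
  rcases hg with ⟨rfl, rfl⟩ | ⟨rfl, rfl⟩ <;> apply comm_kk_x <;> decide +kernel

lemma s4_eq [NeZero e] (he : 7 ≤ e) {l : ℤ} (hg : Good κ l) :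
    sgen (xx e κ) (yy e κ l) 4 = kk e κ (0, 3) (9 * κ) := by
  rw [sgen, s3_eq he hg]
  rcases hg with ⟨rfl, rfl⟩ | ⟨rfl, rfl⟩ <;> apply comm_kk_x <;> decide +kernel

lemma s5_eq [NeZero e] (he : 7 ≤ e) {l : ℤ} (hg : Good κ l) :
    sgen (xx e κ) (yy e κ l) 5 = kk e κ (9, 0) 0 := by
  rw [sgen, s4_eq he hg]
  rcases hg with ⟨rfl, rfl⟩ | ⟨rfl, rfl⟩ <;> apply comm_kk_x <;> decide +kernel

lemma s6_eq [NeZero e] (he : 7 ≤ e) {l : ℤ} (hg : Good κ l) :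
    sgen (xx e κ) (yy e κ l) 6 = kk e κ (54, 18) 0 := by
  rw [sgen, s5_eq he hg]
  rcases hg with ⟨rfl, rfl⟩ | ⟨rfl, rfl⟩ <;> apply comm_kk_x <;> decide +kernel

lemma s7_eq [NeZero e] (he : 7 ≤ e) {l : ℤ} (hg : Good κ l) :
    sgen (xx e κ) (yy e κ l) 7 = kk e κ (54, 0) 0 := by
  rw [sgen, s6_eq he hg]
  rcases hg with ⟨rfl, rfl⟩ | ⟨rfl, rfl⟩ <;> apply comm_kk_x <;> decide +kernel

lemma t3_eq [NeZero e] (he : 7 ≤ e) {l : ℤ} (hg : Good κ l) :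
    tgenD (xx e κ) (yy e κ l) 3 = kk e κ (51, 24) (26 * κ) := by
  rw [tgenD, s2_eq he hg]
  rcases hg with ⟨rfl, rfl⟩ | ⟨rfl, rfl⟩ <;> apply comm_kk_y he <;> decide +kernel

lemma t4_eq [NeZero e] (he : 7 ≤ e) {l : ℤ} (hg : Good κ l) :
    tgenD (xx e κ) (yy e κ l) 4 = kk e κ (0, 3) (15 * κ) := by
  rw [tgenD, s3_eq he hg]
  rcases hg with ⟨rfl, rfl⟩ | ⟨rfl, rfl⟩ <;> apply comm_kk_y he <;> decide +kernel

lemma t5_eq [NeZero e] (he : 7 ≤ e) {l : ℤ} (hg : Good κ l) :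
    tgenD (xx e κ) (yy e κ l) 5 = kk e κ (9, 0) (21 * κ) := by
  rw [tgenD, s4_eq he hg]
  rcases hg with ⟨rfl, rfl⟩ | ⟨rfl, rfl⟩ <;> apply comm_kk_y he <;> decide +kernel

lemma t6_eq [NeZero e] (he : 7 ≤ e) {l : ℤ} (hg : Good κ l) :
    tgenD (xx e κ) (yy e κ l) 6 = kk e κ (54, 18) 0 := by
  rw [tgenD, s5_eq he hg]
  rcases hg with ⟨rfl, rfl⟩ | ⟨rfl, rfl⟩ <;> apply comm_kk_y he <;> decide +kernel

lemma t7_eq [NeZero e] (he : 7 ≤ e) {l : ℤ} (hg : Good κ l) :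
    tgenD (xx e κ) (yy e κ l) 7 = kk e κ (54, 0) (18 * κ) := by
  rw [tgenD, s6_eq he hg]
  rcases hg with ⟨rfl, rfl⟩ | ⟨rfl, rfl⟩ <;> apply comm_kk_y he <;> decide +kernel

lemma y3_eq [NeZero e] (he : 7 ≤ e) {l : ℤ} (hg : Good κ l) :
    ∃ c, yy e κ l ^ 3 = kk e κ (27, 0) (3 * c) := by
  have h1 : ee ((1 : ZMod 81), (0 : ZMod 27)).1 = 1 := by decide +kernel
  have h2 : ee ((1, 0) + act 1 1 (1, 0)).1 = 2 := by decide +kernel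
  have h3 : (0 : ZMod 3) + 1 = 1 := by decide
  have h4 : (0 : ZMod 3) + 2 = 2 := by decide
  have h5 : red e ((l : ZMod (3 ^ (e + 3))) * 3 ^ (e - 1) + l * 3 ^ (e - 1)) = 0 := by
    rw [map_add, red_y he, add_zero]
  have h6 : (l : ZMod (3 ^ (e + 3))) * 3 ^ (e - 1) + l * 3 ^ (e - 1) + l * 3 ^ (e - 1)
      = 0 + iot e l := by
    rw [iot_int]
    obtain ⟨k, rfl⟩ : ∃ k, e = k + 1 := ⟨e - 1, by omega⟩
    simp only [Nat.add_sub_cancel]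
    ring
  have key : yy e κ l ^ 3 = kk e κ (27, 0) (l + (κ * det (1, 0) (act 1 1 (1, 0))
      + κ * det ((1, 0) + act 1 1 (1, 0)) (act 2 2 (1, 0)))) := by
    rw [pow_succ, pow_two, yy, mk_mul, mk_mul]
    simp only [h1, h2, red_y he, h3, h4, h5, h6]
    have h7 : ((1, 0) + act 1 1 (1, 0) + act 2 2 (1, 0) : R) = (27, 0) := by decide +kernel
    rw [h7, kk]
    apply GG.ext
    · rfl
    · simp only [mk, map_add, add_zero, zero_add, map_zero, add_assoc]
  obtain ⟨c, hc⟩ : ∃ c : ZMod 27, (l + (κ * det (1, 0) (act 1 1 (1, 0))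
      + κ * det ((1, 0) + act 1 1 (1, 0)) (act 2 2 (1, 0)))) = 3 * c := by
    rcases hg with ⟨rfl, rfl⟩ | ⟨rfl, rfl⟩ <;> decide +kernel
  exact ⟨c, by rw [key, hc]⟩

open scoped commutatorElement

/-- The map onto the abelianization. -/
def psi (e : ℕ) (κ : ZMod 27) [NeZero e] : GG e κ →* Multiplicative (ZMod (3 ^ e) × ZMod 3) where
  toFun g := Multiplicative.ofAdd (rede e g.n, ee g.r.1)
  map_one' := by simp [one_r, one_n]
  map_mul' g h := by
    rw [ee_mul, mul_n, map_add, map_add, rede_iot, add_zero]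
    rfl

lemma psi_mk [NeZero e] (r : R) (n : ZMod (3 ^ (e + 3))) (c : ZMod 27) :
    psi e κ (mk κ r n c) = Multiplicative.ofAdd (rede e n, ee r.1) := by
  simp [psi, mk, rede_iot]

lemma psi_eq_one [NeZero e] (g : GG e κ) :
    psi e κ g = 1 ↔ ∃ r c, ee r.1 = 0 ∧ g = kk e κ r c := by
  constructor
  · intro h
    have h' : (rede e g.n, ee g.r.1) = 0 := h
    rw [Prod.mk_eq_zero] at h'
    obtain ⟨c, hc⟩ := exists_iot_of_rede e g.n h'.1
    refine ⟨g.r, c, h'.2, ?_⟩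
    apply GG.ext
    · rfl
    · simp [kk, mk, hc]
  · rintro ⟨r, c, h, rfl⟩
    rw [kk, psi_mk, h]
    simp

lemma psi_surj [NeZero e] : Function.Surjective (psi e κ) := by
  intro a
  obtain ⟨⟨m, j⟩, rfl⟩ := Multiplicative.ofAdd.surjective a
  obtain ⟨k, rfl⟩ := ZMod.intCast_surjective m
  obtain ⟨i, rfl⟩ := ZMod.intCast_surjective j
  refine ⟨mk κ ((i : ZMod 81), 0) k 0, ?_⟩
  rw [psi_mk]
  simp

lemma ex_tt : ∀ a : ZMod 81, ee a = 0 → ∃ a' : ZMod 27, a = tt a' := by decide +kernel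

lemma comb_eq : ∀ a' b : ZMod 27, ((3 * a' - b).val • ((57, 2) : R) +
    (2 * a' + 8 * b).val • ((78, 24) : R)) = (tt a', b) := by decide +kernel

lemma mem_of_K [NeZero e] (H : Subgroup (GG e κ)) (c2 c3 cw : ZMod 27) (hcw : ∃ d, cw * d = 1)
    (h2 : kk e κ (57, 2) c2 ∈ H) (h3 : kk e κ (78, 24) c3 ∈ H) (hw : kk e κ 0 cw ∈ H) :
    (psi e κ).ker ≤ H := by
  intro g hg
  obtain ⟨r, c, hr, rfl⟩ := (psi_eq_one g).1 hg
  obtain ⟨a, b⟩ := r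
  have hw' : ∀ c, kk e κ 0 c ∈ H := by
    obtain ⟨d, hd⟩ := hcw
    intro c
    have := H.pow_mem hw (d * c).val
    rw [kk_pow _ (by simp)] at this
    have e1 : (d * c).val • cw = c := by
      rw [nsmul_eq_mul, ZMod.natCast_zmod_val]
      linear_combination c * hd
    rwa [e1, smul_zero] at this
  obtain ⟨a', ha⟩ : ∃ a' : ZMod 27, a = tt a' := by
    exact ex_tt a hr
  subst ha
  have hk := H.mul_mem (H.pow_mem h2 (3 * a' - b).val) (H.pow_mem h3 (2 * a' + 8 * b).val)
  rw [kk_pow _ (by decide +kernel), kk_pow _ (by decide +kernel), kk_mul] at hk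
  · have e1 : ((3 * a' - b).val • ((57, 2) : R) + (2 * a' + 8 * b).val • ((78, 24) : R)) =
        (tt a', b) := by
      exact comb_eq a' b
    rw [e1] at hk
    have := H.mul_mem hk (hw' (c - ((3 * a' - b).val • c2 + (2 * a' + 8 * b).val • c3 +
      κ * det ((3 * a' - b).val • (57, 2)) ((2 * a' + 8 * b).val • (78, 24)))))
    rw [kk_mul _ _ hr] at this
    convert this using 2
    · simp
    · simp [det]
  · have : ee (57 : ZMod 81) = 0 := by decide +kernel
    simp [this]

/-- The product of three elements of a group. -/
def mulThree {G : Type*} [Group G] (a b c : G) : G := a * b * c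

lemma mulThree_eq [NeZero e] (a b c : GG e κ) : mulThree a b c = a * b * c := rfl

lemma t_rel [NeZero e] (he : 7 ≤ e) {l : ℤ} (hg : Good κ l) :
    tgenD (xx e κ) (yy e κ l) 3 = mulThree (sgen (xx e κ) (yy e κ l) 3)
      (sgen (xx e κ) (yy e κ l) 7) (kk e κ 0 (23 * κ)) := by
  rw [mulThree_eq]
  have h1 : ee (78 : ZMod 81) = 0 := by decide +kernel
  rw [t3_eq he hg, s3_eq he hg, s7_eq he hg, kk_mul _ _ h1, kk_mul _ _ (by decide +kernel)]
  rcases hg with ⟨rfl, rfl⟩ | ⟨rfl, rfl⟩ <;> congr 1 <;> decide +kernel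

lemma comm'_mem {G : Type*} [Group G] (a b : G) : comm' a b ∈ commutator G := by
  have : comm' a b = ⁅a⁻¹, b⁻¹⁆ := by simp [comm', commutatorElement_def]
  rw [this, commutator_def]
  exact Subgroup.commutator_mem_commutator (Subgroup.mem_top _) (Subgroup.mem_top _)

lemma unit_kappa {l : ℤ} (hg : Good κ l) : ∃ d, (23 * κ) * d = 1 := by
  rcases hg with ⟨rfl, rfl⟩ | ⟨rfl, rfl⟩ <;> decide +kernel

lemma mem_third {G : Type*} [Group G] (H : Subgroup G) {a b c t : G} (ha : a ∈ H) (hb : b ∈ H)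
    (ht : t ∈ H) (h : t = mulThree a b c) : c ∈ H := by
  rw [mulThree] at h
  have : c = (a * b)⁻¹ * t := by rw [h]; group
  rw [this]
  exact H.mul_mem (H.inv_mem (H.mul_mem ha hb)) ht

lemma psi_xy [NeZero e] (l : ℤ) (g : GG e κ) : ∃ k j : ℕ,
    psi e κ (xx e κ ^ k * yy e κ l ^ j) = psi e κ g := by
  have : NeZero (3 ^ e) := ⟨by positivity⟩
  have e1 : ee (1, (0 : ZMod 27)).1 = 1 := by decide +kernel
  have e0 : ee (0 : R).1 = 0 := by decide +kernel
  set m : ZMod (3 ^ e) := rede e (l * 3 ^ (e - 1)) with hm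
  refine ⟨(rede e g.n - (ee g.r.1).val • m).val, (ee g.r.1).val, ?_⟩
  have h1 : psi e κ (xx e κ) = Multiplicative.ofAdd (1, 0) := by
    rw [xx, psi_mk, e0, map_one]
  have h2 : psi e κ (yy e κ l) = Multiplicative.ofAdd (m, 1) := by
    rw [yy, psi_mk, e1]
  have h3 : psi e κ g = Multiplicative.ofAdd (rede e g.n, ee g.r.1) := rfl
  rw [map_mul, map_pow, map_pow, h1, h2, h3, ← ofAdd_nsmul, ← ofAdd_nsmul, ← ofAdd_add,
    Prod.smul_mk, Prod.smul_mk, Prod.mk_add_mk]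
  congr 2
  · rw [nsmul_one, ZMod.natCast_zmod_val, sub_add_cancel]
  · rw [smul_zero, zero_add, nsmul_one, ZMod.natCast_zmod_val]

lemma ker_psi [NeZero e] (he : 7 ≤ e) {l : ℤ} (hg : Good κ l) :
    (psi e κ).ker = commutator (GG e κ) := by
  apply le_antisymm
  · have hc : ∀ a b : GG e κ, comm' a b ∈ commutator (GG e κ) := fun a b => comm'_mem a b
    revert hc
    generalize commutator (GG e κ) = H
    intro hc
    have h2 : sgen (xx e κ) (yy e κ l) 2 ∈ H := by rw [sgen]; apply hc
    have h3 : sgen (xx e κ) (yy e κ l) 3 ∈ H := by rw [sgen]; apply hc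
    have h7 : sgen (xx e κ) (yy e κ l) 7 ∈ H := by rw [sgen]; apply hc
    have ht : tgenD (xx e κ) (yy e κ l) 3 ∈ H := by rw [tgenD]; apply hc
    have hw : kk e κ 0 (23 * κ) ∈ H := mem_third H h3 h7 ht (t_rel he hg)
    rw [s2_eq he hg] at h2
    rw [s3_eq he hg] at h3
    exact mem_of_K H _ _ _ (unit_kappa hg) h2 h3 hw
  · exact Abelianization.commutator_subset_ker _

lemma gen [NeZero e] (he : 7 ≤ e) {l : ℤ} (hg : Good κ l) :
    Subgroup.closure {xx e κ, yy e κ l} = ⊤ := by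
  set H := Subgroup.closure {xx e κ, yy e κ l} with hH
  have hx : xx e κ ∈ H := Subgroup.subset_closure (by simp)
  have hy : yy e κ l ∈ H := Subgroup.subset_closure (by simp)
  have hc : ∀ a ∈ H, ∀ b ∈ H, comm' a b ∈ H := fun a ha b hb =>
    H.mul_mem (H.mul_mem (H.mul_mem (H.inv_mem ha) (H.inv_mem hb)) ha) hb
  have h2 : sgen (xx e κ) (yy e κ l) 2 ∈ H := by rw [sgen]; exact hc _ hy _ hx
  have h3 : sgen (xx e κ) (yy e κ l) 3 ∈ H := by rw [sgen]; exact hc _ h2 _ hx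
  have hw := H.pow_mem hx (3 ^ e)
  rw [xx_pow_w] at hw
  rw [s2_eq he hg] at h2
  rw [s3_eq he hg] at h3
  have hK := mem_of_K H _ _ _ ⟨1, by decide⟩ h2 h3 hw
  rw [eq_top_iff]
  intro g _
  obtain ⟨k, j, hp⟩ := psi_xy l g
  have hh : xx e κ ^ k * yy e κ l ^ j ∈ H := H.mul_mem (H.pow_mem hx _) (H.pow_mem hy _)
  have h4 : (xx e κ ^ k * yy e κ l ^ j)⁻¹ * g ∈ H :=
    hK (by rw [MonoidHom.mem_ker, map_mul, map_inv, hp, inv_mul_cancel])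
  have h5 := H.mul_mem hh h4
  rwa [mul_inv_cancel_left] at h5

/-- The automorphism `σ`. -/
def sig (e : ℕ) (κ : ZMod 27) [NeZero e] : GG e κ ≃* GG e κ where
  toFun g := ⟨ta g.r, - g.n⟩
  invFun g := ⟨ta g.r, - g.n⟩
  left_inv g := by simp [ta_ta]
  right_inv g := by simp [ta_ta]
  map_mul' g h := by
    have hu : uu (⟨ta g.r, - g.n⟩ : GG e κ) (ta h.r) = ta (uu g h.r) := by
      rw [uu, uu, ta_act, ee_ta, map_neg, neg_add]
    apply GG.ext
    · rw [mul_r, mul_r, hu, map_add]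
    · rw [mul_n, mul_n, hu, det_ta, mul_neg, map_neg, neg_add, neg_add]

lemma sigma_G [NeZero e] (he : 7 ≤ e) {l : ℤ} (hg : Good κ l) : IsSigmaGroup (GG e κ) := by
  refine ⟨sig e κ, fun g => ?_⟩
  rw [← mul_eq_one_iff_eq_inv, ← map_mul]
  have : sig e κ g * g ∈ commutator (GG e κ) := by
    rw [← ker_psi he hg, MonoidHom.mem_ker, map_mul, mul_eq_one_iff_eq_inv]
    have h1 : psi e κ (sig e κ g) = Multiplicative.ofAdd (rede e (- g.n), ee (ta g.r).1) := rfl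
    rw [h1, map_neg, ee_ta]
    rfl
  exact (QuotientGroup.eq_one_iff _).2 this

/-- The equivalence of `GG` with a product type. -/
def equivProd (e : ℕ) (κ : ZMod 27) : GG e κ ≃ (ZMod 81 × ZMod 27) × ZMod (3 ^ (e + 3)) where
  toFun g := (g.r, g.n)
  invFun p := ⟨p.1, p.2⟩

instance : Finite (GG e κ) := by
  have : NeZero (3 ^ (e + 3)) := ⟨by positivity⟩
  exact Finite.of_equiv _ (equivProd e κ).symm

lemma card_G : Nat.card (GG e κ) = 3 ^ (10 + e) := by
  rw [Nat.card_congr (equivProd e κ), Nat.card_prod, Nat.card_prod, Nat.card_zmod, Nat.card_zmod,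
    Nat.card_zmod]
  ring

lemma kk_ne [NeZero e] {c : ZMod 27} (hc : c ≠ 0) : kk e κ 0 c ≠ 1 := by
  intro h
  have h1 : (0 : ZMod (3 ^ (e + 3))) + iot e c = 0 := congrArg GG.n h
  rw [zero_add] at h1
  exact hc (iot_inj e c h1)

lemma derived2 [NeZero e] (he : 7 ≤ e) {l : ℤ} (hg : Good κ l) :
    derivedSeries (GG e κ) 2 = Subgroup.zpowers (kk e κ 0 3) := by
  have h1 : derivedSeries (GG e κ) 1 = (psi e κ).ker := by
    rw [ker_psi he hg, derivedSeries_one]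
  rw [derivedSeries_succ, h1]
  have hz : ∀ c, kk e κ 0 (3 * c) ∈ Subgroup.zpowers (kk e κ 0 3) := by
    intro c
    refine ⟨(c.val : ℤ), ?_⟩
    simp only [zpow_natCast]
    rw [kk_pow _ (by simp)]
    simp [mul_comm]
  apply le_antisymm
  · rw [Subgroup.commutator_le]
    intro a ha b hb
    obtain ⟨r, c, hr, rfl⟩ := (psi_eq_one a).1 ha
    obtain ⟨r', c', hr', rfl⟩ := (psi_eq_one b).1 hb
    obtain ⟨d, hd⟩ : ∃ d, det r r' = 3 * d := by
      obtain ⟨a, b⟩ := r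
      obtain ⟨a', b'⟩ := r'
      have key : ∀ a : ZMod 81, ee a = 0 → ∃ d, pp a = 3 * d := by decide +kernel
      obtain ⟨d, hd⟩ := key a hr
      obtain ⟨d', hd'⟩ := key a' hr'
      exact ⟨d * b' - b * d', by simp only [det, hd, hd']; ring⟩
    have hd' : det r' r = - (3 * d) := by
      rw [← hd]; simp [det]; ring
    have : kk e κ r c * kk e κ r' c' = kk e κ 0 (3 * (2 * κ * d)) * (kk e κ r' c' * kk e κ r c) := by
      rw [kk_mul _ _ hr, kk_mul _ _ hr', kk_mul _ _ (by simp), hd, hd', zero_add, add_comm r]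
      congr 1
      simp [det]
      ring
    have h2 : ⁅kk e κ r c, kk e κ r' c'⁆ = kk e κ 0 (3 * (2 * κ * d)) := by
      rw [commutatorElement_def, this]; group
    rw [h2]
    exact hz _
  · rw [Subgroup.zpowers_le]
    have m2 : kk e κ (57, 2) κ ∈ (psi e κ).ker := (psi_eq_one _).2 ⟨_, _, by decide +kernel, rfl⟩
    have m3 : kk e κ (78, 24) κ ∈ (psi e κ).ker := (psi_eq_one _).2 ⟨_, _, by decide +kernel, rfl⟩
    have h2 := Subgroup.commutator_mem_commutator m2 m3
    obtain ⟨d, hd, k, hk⟩ : ∃ d : ZMod 27, κ * det (57, 2) (78, 24) = κ * det (78, 24) (57, 2) + d ∧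
        ∃ k : ZMod 27, k * d = 3 := by
      rcases hg with ⟨rfl, rfl⟩ | ⟨rfl, rfl⟩ <;> decide +kernel
    have : kk e κ (57, 2) κ * kk e κ (78, 24) κ =
        kk e κ 0 d * (kk e κ (78, 24) κ * kk e κ (57, 2) κ) := by
      rw [kk_mul _ _ (by decide +kernel), kk_mul _ _ (by decide +kernel), kk_mul _ _ (by simp), hd,
        zero_add, add_comm (57, 2)]
      congr 1
      simp [det]
      ring
    have h3 : ⁅kk e κ (57, 2) κ, kk e κ (78, 24) κ⁆ = kk e κ 0 d := by
      rw [commutatorElement_def, this]; group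
    rw [h3] at h2
    have := Subgroup.pow_mem _ h2 k.val
    rw [kk_pow _ (by simp)] at this
    simpa [hk] using this

lemma card_derived2 [NeZero e] (he : 7 ≤ e) {l : ℤ} (hg : Good κ l) :
    Nat.card (derivedSeries (GG e κ) 2) = 9 := by
  rw [derived2 he hg, Nat.card_zpowers]
  have : Fact (Nat.Prime 3) := ⟨by norm_num⟩
  have := orderOf_eq_prime_pow (p := 3) (n := 1) (x := kk e κ 0 3)
    (by
      rw [kk_pow _ (by simp), smul_zero]
      exact kk_ne (by decide))
    (by
      rw [kk_pow _ (by simp), smul_zero]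
      exact kk_zero)
  simpa using this

lemma abel_equiv {G A : Type*} [Group G] [CommGroup A] (f : G →* A)
    (hf : Function.Surjective f) (hk : f.ker = commutator G) : Nonempty (Abelianization G ≃* A) :=
  ⟨(QuotientGroup.quotientMulEquivOfEq hk.symm).trans
    (QuotientGroup.quotientKerEquivOfSurjective f hf)⟩

lemma sgen_map {G H : Type*} [Group G] [Group H] (f : G →* H) (x y : G) :
    ∀ j, sgen (f x) (f y) j = f (sgen x y j)
  | 0 => by simp [sgen]
  | 1 => by simp [sgen]
  | 2 => by simp [sgen, comm']
  | (n + 3) => by simp [sgen, comm', sgen_map f x y (n + 2)]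

lemma tgenD_map {G H : Type*} [Group G] [Group H] (f : G →* H) (x y : G) (j : ℕ) :
    tgenD (f x) (f y) j = f (tgenD x y j) := by
  simp [tgenD, comm', sgen_map]

lemma abel_quot {G A : Type*} [Group G] [CommGroup A] (N : Subgroup G) [N.Normal] (f : G →* A)
    (hf : Function.Surjective f) (hk : f.ker = commutator G) (hN : N ≤ commutator G) :
    Nonempty (Abelianization (G ⧸ N) ≃* A) := by
  refine abel_equiv (QuotientGroup.lift N f (fun x hx => ?_)) ?_ ?_
  · have := hN hx
    rwa [← hk] at this
  · intro a
    obtain ⟨g, rfl⟩ := hf a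
    exact ⟨(g : G ⧸ N), rfl⟩
  · apply le_antisymm
    · intro m hm
      obtain ⟨g, rfl⟩ := QuotientGroup.mk_surjective m
      have hg : g ∈ commutator G := by
        rw [← hk]; exact hm
      have h1 : (QuotientGroup.mk' N) g ∈ (derivedSeries G 1).map (QuotientGroup.mk' N) :=
        Subgroup.mem_map_of_mem _ (by rwa [derivedSeries_one])
      have h2 := map_derivedSeries_le_derivedSeries (QuotientGroup.mk' N) 1 h1
      rwa [derivedSeries_one] at h2
    · exact Abelianization.commutator_subset_ker _

lemma sigma_quot {G : Type*} [Group G] (n : ℕ) (h : IsSigmaGroup G) :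
    IsSigmaGroup (G ⧸ derivedSeries G n) := by
  obtain ⟨σ, hσ⟩ := h
  refine ⟨QuotientGroup.congr _ _ σ (map_derivedSeries_eq (f := σ.toMonoidHom) σ.surjective n),
    fun m => ?_⟩
  obtain ⟨g, rfl⟩ := QuotientGroup.mk_surjective m
  have := congrArg (Abelianization.map (QuotientGroup.mk' (derivedSeries G n))) (hσ g)
  rw [map_inv, Abelianization.map_of, Abelianization.map_of] at this
  exact this

lemma metab_quot {G : Type*} [Group G] : IsMetabelian (G ⧸ derivedSeries G 2) := by
  rw [IsMetabelian, ← map_derivedSeries_eq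
    (QuotientGroup.mk'_surjective (derivedSeries G 2)) 2]
  rw [eq_bot_iff, Subgroup.map_le_iff_le_comap]
  intro g hg
  exact (QuotientGroup.eq_one_iff g).2 hg

/-- Congruence modulo the second derived subgroup. -/
lemma kk_cong [NeZero e] (he : 7 ≤ e) {l : ℤ} (hg : Good κ l) (r r' : R) (c c' : ZMod 27)
    (hr : ee r.1 = 0) (hrr : r = r') (hc : 9 * c = 9 * c') :
    QuotientGroup.mk' (derivedSeries (GG e κ) 2) (kk e κ r c) =
    QuotientGroup.mk' (derivedSeries (GG e κ) 2) (kk e κ r' c') := by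
  subst hrr
  obtain ⟨d, hd⟩ : ∃ d : ZMod 27, c' = c + 3 * d := by
    revert c c'; decide +kernel
  have h1 : kk e κ r c' = kk e κ r c * kk e κ 0 3 ^ d.val := by
    rw [kk_pow _ (by simp), kk_mul _ _ hr, hd]
    simp [det, mul_comm]
  rw [h1]
  symm
  apply QuotientGroup.mk_mul_of_mem
  rw [derived2 he hg]
  exact Subgroup.pow_mem _ (Subgroup.mem_zpowers _) _

end D5

open D5 in
theorem stmt14 (e i : ℕ) (he : 7 ≤ e) (hi : i = 2 ∨ i = 3) :
    ∃ (M : Type) (_ : Group M) (_ : Finite M) (x y : M),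
      Subgroup.closure {x, y} = ⊤ ∧
      Nat.card M = 3 ^ (8 + e) ∧
      IsMetabelian M ∧
      IsSigmaGroup M ∧
      (x ^ 3 ^ e) ^ 3 = 1 ∧
      y ^ 3 = sgen x y 7 ^ 2 ∧
      sgen x y 2 ^ 3 = sgen x y 4 ^ 2 * sgen x y 5 ∧
      sgen x y 3 ^ 3 = sgen x y 5 ^ 2 * sgen x y 6 ∧
      sgen x y 4 ^ 3 = sgen x y 6 ^ 2 * sgen x y 7 ∧
      sgen x y 5 ^ 3 = sgen x y 7 ^ 2 ∧
      tgenD x y 3 = sgen x y 3 * sgen x y 7 * (x ^ 3 ^ e) ^ (i - 1) ∧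
      tgenD x y 4 = sgen x y 4 ∧
      tgenD x y 5 = sgen x y 5 ∧
      tgenD x y 6 = sgen x y 6 ∧
      tgenD x y 7 = sgen x y 7 ∧
      Nonempty (Abelianization M ≃* Multiplicative (ZMod (3 ^ e) × ZMod 3)) ∧
      ∃ (G : Type) (_ : Group G) (_ : Finite G),
        Nat.card G = 3 ^ (10 + e) ∧
        Nonempty (Abelianization G ≃* Multiplicative (ZMod (3 ^ e) × ZMod 3)) ∧
        IsSigmaGroup G ∧
        derivedSeries G 2 ≠ ⊥ ∧
        derivedSeries G 3 = ⊥ ∧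
        ∃ φ : G →* M, Function.Surjective φ ∧ φ.ker = derivedSeries G 2 := by
  obtain ⟨κ, l, hg, hik⟩ : ∃ κ l, Good κ l ∧ 9 * (23 * κ) = 9 * ((i - 1 : ℕ) : ZMod 27) := by
    rcases hi with rfl | rfl
    · exact ⟨14, 1, Or.inl ⟨rfl, rfl⟩, by decide +kernel⟩
    · exact ⟨13, -1, Or.inr ⟨rfl, rfl⟩, by decide +kernel⟩
  have : NeZero e := ⟨by omega⟩
  have hk9 : ∀ a : ZMod 27, 9 * (3 * a) = 9 * 0 := by decide +kernel
  have hcard : Nat.card (GG e κ ⧸ derivedSeries (GG e κ) 2) = 3 ^ (8 + e) := by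
    have h1 := Subgroup.card_eq_card_quotient_mul_card_subgroup (derivedSeries (GG e κ) 2)
    rw [card_G, card_derived2 he hg] at h1
    have h2 : 3 ^ (10 + e) = 3 ^ (8 + e) * 9 := by ring
    omega
  have hle : derivedSeries (GG e κ) 2 ≤ commutator (GG e κ) := by
    rw [← derivedSeries_one]
    exact derivedSeries_antitone _ (by norm_num)
  have hr78 : ee ((78 : ZMod 81), (24 : ZMod 27)).1 = 0 := by decide +kernel
  set f := QuotientGroup.mk' (derivedSeries (GG e κ) 2) with hf
  refine ⟨GG e κ ⧸ derivedSeries (GG e κ) 2, inferInstance, inferInstance, f (xx e κ),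
    f (yy e κ l), ?_, hcard, metab_quot, sigma_quot 2 (sigma_G he hg), ?_, ?_, ?_, ?_, ?_, ?_, ?_,
    ?_, ?_, ?_, ?_, abel_quot _ (psi e κ) psi_surj (ker_psi he hg) hle,
    GG e κ, inferInstance, inferInstance, card_G, abel_equiv (psi e κ) psi_surj (ker_psi he hg),
    sigma_G he hg, ?_, ?_, f, QuotientGroup.mk'_surjective _, QuotientGroup.ker_mk' _⟩
  · have h1 := congrArg (Subgroup.map f) (gen he hg)
    rw [MonoidHom.map_closure, Set.image_pair, ← MonoidHom.range_eq_map,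
      MonoidHom.range_eq_top.2 (QuotientGroup.mk'_surjective _)] at h1
    exact h1
  · rw [← map_pow, xx_pow_w, ← map_pow, kk_pow _ (by simp), ← map_one f, ← kk_zero]
    exact kk_cong he hg _ _ _ _ (by simp) (by simp) (by decide +kernel)
  · obtain ⟨c, hc⟩ := y3_eq he hg
    rw [sgen_map, s7_eq he hg, ← map_pow, ← map_pow, hc, kk_pow _ (by decide +kernel)]
    exact kk_cong he hg _ _ _ _ (by decide +kernel) (by decide +kernel) (by rw [hk9]; simp)
  · rw [sgen_map, sgen_map, sgen_map, s2_eq he hg, s4_eq he hg, s5_eq he hg, ← map_pow, ← map_pow,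
      ← map_mul, kk_pow _ (by decide +kernel), kk_pow _ (by decide +kernel),
      kk_mul _ _ (by decide +kernel)]
    exact kk_cong he hg _ _ _ _ (by decide +kernel) (by decide +kernel)
      (by rcases hg with ⟨rfl, rfl⟩ | ⟨rfl, rfl⟩ <;> decide +kernel)
  · rw [sgen_map, sgen_map, sgen_map, s3_eq he hg, s5_eq he hg, s6_eq he hg, ← map_pow, ← map_pow,
      ← map_mul, kk_pow _ (by decide +kernel), kk_pow _ (by decide +kernel),
      kk_mul _ _ (by decide +kernel)]
    exact kk_cong he hg _ _ _ _ (by decide +kernel) (by decide +kernel)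
      (by rcases hg with ⟨rfl, rfl⟩ | ⟨rfl, rfl⟩ <;> decide +kernel)
  · rw [sgen_map, sgen_map, sgen_map, s4_eq he hg, s6_eq he hg, s7_eq he hg, ← map_pow, ← map_pow,
      ← map_mul, kk_pow _ (by decide +kernel), kk_pow _ (by decide +kernel),
      kk_mul _ _ (by decide +kernel)]
    exact kk_cong he hg _ _ _ _ (by decide +kernel) (by decide +kernel)
      (by rcases hg with ⟨rfl, rfl⟩ | ⟨rfl, rfl⟩ <;> decide +kernel)
  · rw [sgen_map, sgen_map, s5_eq he hg, s7_eq he hg, ← map_pow, ← map_pow,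
      kk_pow _ (by decide +kernel), kk_pow _ (by decide +kernel)]
    exact kk_cong he hg _ _ _ _ (by decide +kernel) (by decide +kernel) (by simp)
  · rw [tgenD_map, sgen_map, sgen_map, t_rel he hg, mulThree, map_mul, map_mul, ← map_pow, xx_pow_w,
      ← map_pow, kk_pow _ (by simp)]
    congr 1
    exact kk_cong he hg _ _ _ _ (by simp) (by simp) (by rw [hik]; simp)
  · rw [tgenD_map, sgen_map, t4_eq he hg, s4_eq he hg]
    exact kk_cong he hg _ _ _ _ (by decide +kernel) rfl
      (by rcases hg with ⟨rfl, rfl⟩ | ⟨rfl, rfl⟩ <;> decide +kernel)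
  · rw [tgenD_map, sgen_map, t5_eq he hg, s5_eq he hg]
    exact kk_cong he hg _ _ _ _ (by decide +kernel) rfl
      (by rcases hg with ⟨rfl, rfl⟩ | ⟨rfl, rfl⟩ <;> decide +kernel)
  · rw [tgenD_map, sgen_map, t6_eq he hg, s6_eq he hg]
  · rw [tgenD_map, sgen_map, t7_eq he hg, s7_eq he hg]
    exact kk_cong he hg _ _ _ _ (by decide +kernel) rfl
      (by rcases hg with ⟨rfl, rfl⟩ | ⟨rfl, rfl⟩ <;> decide +kernel)
  · intro h
    have h1 := card_derived2 he hg
    rw [h, Subgroup.card_bot] at h1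
    norm_num at h1
  · rw [derivedSeries_succ, derived2 he hg, eq_bot_iff, Subgroup.commutator_le]
    rintro _ ⟨a, rfl⟩ _ ⟨b, rfl⟩
    rw [Subgroup.mem_bot, commutatorElement_eq_one_iff_mul_comm]
    exact (Commute.refl _).zpow_zpow a b
end

section
/- For every integer e ≥ 7 and each i ∈ {2,3}, there exists a finite metabelian σ-group M of order 3^{8+e}, generated by two elements x and y satisfying w^3 = 1, y^3 = s₃^2 s₄, s_j^3 = s_{j+2}^2 s_{j+3} for j = 2,3,4, s₅^3 = s₇^2, and t₃ = s₇ w^{i-1}, whose abelianization is isomorphic to (ZMod (3^e)) × (ZMod 3); moreover there exists a finite group G of order 3^{10+e} with the same abelianization, admitting a σ-automorphism, with second derived subgroup nontrivial and third derived subgroup trivial (derived length exactly 3), such that G/G'' is isomorphic to M. -/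
namespace D6

/-- Multiplication by `c` as an additive map `ZMod n → ZMod m`. -/
def mulHom (n m : ℕ) (c : ℤ) (h : ((c * n : ℤ) : ZMod m) = 0) : ZMod n →+ ZMod m :=
  ZMod.lift n ⟨(Int.castAddHom (ZMod m)).comp (AddMonoidHom.mulLeft c), by simpa using h⟩

theorem mulHom_int (n m : ℕ) (c : ℤ) (h) (z : ℤ) :
    mulHom n m c h (z : ZMod n) = ((c * z : ℤ) : ZMod m) := by
  simp [mulHom]

/-- The additive group `ℤ[ω]/(X^7)`, `X = ω - 1`, in the basis `1, X`. -/
abbrev A := ZMod 81 × ZMod 27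

def red : ZMod 81 →+ ZMod 27 := mulHom 81 27 1 (by decide)
def tri : ZMod 27 →+ ZMod 81 := mulHom 27 81 3 (by decide)
def j27 : ZMod 27 →+ ZMod 81 := mulHom 27 81 (-27) (by decide)
def pi3 (e : ℕ) : ZMod (3 ^ (e + 3)) →+ ZMod 3 := mulHom _ 3 1 (by
  push_cast; rw [show (3 : ZMod 3) = 0 from by decide]; simp)
def iq (e q : ℕ) : ZMod 27 →+ ZMod (3 ^ (e + 3)) := mulHom 27 _ (q * 3 ^ e) (by
  have : ((q * 3 ^ e * (27 : ℕ) : ℤ)) = q * ((3 ^ (e + 3) : ℕ) : ℤ) := by push_cast; ring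
  rw [this, Int.cast_mul, Int.cast_natCast ((3 ^ (e + 3) : ℕ)), ZMod.natCast_self, mul_zero])

theorem red_int (z : ℤ) : red (z : ZMod 81) = (z : ZMod 27) := by simp [red, mulHom_int]
theorem tri_int (z : ℤ) : tri (z : ZMod 27) = ((3 * z : ℤ) : ZMod 81) := mulHom_int ..
theorem j27_int (z : ℤ) : j27 (z : ZMod 27) = ((-27 * z : ℤ) : ZMod 81) := mulHom_int ..
theorem pi3_int (e) (z : ℤ) : pi3 e (z : ZMod (3 ^ (e + 3))) = (z : ZMod 3) := by
  simp [pi3, mulHom_int]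
theorem iq_int (e q) (z : ℤ) :
    iq e q (z : ZMod 27) = ((q * 3 ^ e * z : ℤ) : ZMod (3 ^ (e + 3))) := mulHom_int ..

/-- the element `n + m X` -/
def el (n m : ℤ) : A := ((n : ZMod 81), (m : ZMod 27))

theorem el_surj (a : A) : ∃ n m, a = el n m := by
  obtain ⟨a, b⟩ := a
  obtain ⟨n, rfl⟩ := ZMod.intCast_surjective a
  obtain ⟨m, rfl⟩ := ZMod.intCast_surjective b
  exact ⟨n, m, rfl⟩

theorem el_add (n m n' m' : ℤ) : el n m + el n' m' = el (n + n') (m + m') := by simp [el]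
theorem el_neg (n m : ℤ) : -el n m = el (-n) (-m) := by simp [el]

theorem el_eq (n m n' m' : ℤ) (h : (81 : ℤ) ∣ n - n') (h' : (27 : ℤ) ∣ m - m') :
    el n m = el n' m' := by
  unfold el
  congr 1
  · exact ((ZMod.intCast_eq_intCast_iff_dvd_sub n' n 81).2 (by simpa using h)).symm
  · exact ((ZMod.intCast_eq_intCast_iff_dvd_sub m' m 27).2 (by simpa using h')).symm

/-- multiplication by `ω` -/
def om (a : A) : A := (a.1 - tri a.2, red a.1 - 2 * a.2)
/-- Galois conjugation -/
def bar (a : A) : A := (a.1 - tri a.2, -a.2)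
/-- half of the determinant form -/
def D (a b : A) : ZMod 27 := 14 * (a.2 * red b.1 - red a.1 * b.2)
def jA (c : ZMod 27) : A := (j27 c, 0)

theorem om_el (n m : ℤ) : om (el n m) = el (n - 3 * m) (n - 2 * m) := by
  simp [om, el, red_int, tri_int]
theorem bar_el (n m : ℤ) : bar (el n m) = el (n - 3 * m) (-m) := by
  simp [bar, el, tri_int]
theorem D_el (n m n' m' : ℤ) :
    D (el n m) (el n' m') = ((14 * (m * n' - n * m') : ℤ) : ZMod 27) := by
  simp [D, el, red_int]
theorem jA_int (z : ℤ) : jA (z : ZMod 27) = el (-27 * z) 0 := by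
  simp [jA, el, j27_int]

theorem om_add (a b : A) : om (a + b) = om a + om b := by
  simp only [om, Prod.fst_add, Prod.snd_add, map_add, Prod.mk_add_mk]; congr 1 <;> ring
theorem om_neg (a : A) : om (-a) = - om a := by
  simp only [om, Prod.fst_neg, Prod.snd_neg, map_neg, Prod.neg_mk]; congr 1 <;> ring
theorem bar_add (a b : A) : bar (a + b) = bar a + bar b := by
  simp only [bar, Prod.fst_add, Prod.snd_add, map_add, Prod.mk_add_mk]; congr 1 <;> ring
theorem bar_neg (a : A) : bar (-a) = - bar a := by
  simp only [bar, Prod.fst_neg, Prod.snd_neg, map_neg, Prod.neg_mk]; congr 1; ring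
theorem D_add_left (a b c : A) : D (a + b) c = D a c + D b c := by
  simp only [D, Prod.fst_add, Prod.snd_add, map_add]; ring
theorem D_add_right (a b c : A) : D a (b + c) = D a b + D a c := by
  simp only [D, Prod.fst_add, Prod.snd_add, map_add]; ring
theorem D_neg_left (a b : A) : D (-a) b = - D a b := by
  simp only [D, Prod.fst_neg, Prod.snd_neg, map_neg]; ring
theorem D_neg_right (a b : A) : D a (-b) = - D a b := by
  simp only [D, Prod.fst_neg, Prod.snd_neg, map_neg]; ring
theorem D_self (a : A) : D a a = 0 := by
  simp only [D]; ring
theorem jA_add (c d : ZMod 27) : jA (c + d) = jA c + jA d := by simp [jA]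
theorem jA_zero : jA 0 = 0 := by simp [jA]
theorem jA_neg (c : ZMod 27) : jA (-c) = - jA c := by simp [jA]

theorem om3 (a : A) : om (om (om a)) = a := by
  obtain ⟨n, m, rfl⟩ := el_surj a
  simp only [om_el]; congr 1 <;> ring
theorem bar_bar (a : A) : bar (bar a) = a := by
  obtain ⟨n, m, rfl⟩ := el_surj a
  simp only [bar_el]; congr 1 <;> ring
theorem bar_om (a : A) : bar (om a) = om (om (bar a)) := by
  obtain ⟨n, m, rfl⟩ := el_surj a
  simp only [bar_el, om_el]; congr 1 <;> ring
theorem D_om (a b : A) : D (om a) (om b) = D a b := by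
  obtain ⟨n, m, rfl⟩ := el_surj a
  obtain ⟨n', m', rfl⟩ := el_surj b
  simp only [om_el, D_el]; congr 1; ring
theorem D_bar (a b : A) : D (bar a) (bar b) = - D a b := by
  obtain ⟨n, m, rfl⟩ := el_surj a
  obtain ⟨n', m', rfl⟩ := el_surj b
  simp only [bar_el, D_el, ← Int.cast_neg]; congr 1; ring
theorem D_j_left (c : ZMod 27) (b : A) : D (jA c) b = 0 := by
  obtain ⟨n', m', rfl⟩ := el_surj b
  obtain ⟨z, rfl⟩ := ZMod.intCast_surjective c
  rw [jA_int, D_el]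
  exact (ZMod.intCast_zmod_eq_zero_iff_dvd _ 27).2 ⟨14 * z * m', by push_cast; ring⟩
theorem D_j_right (c : ZMod 27) (b : A) : D b (jA c) = 0 := by
  obtain ⟨n', m', rfl⟩ := el_surj b
  obtain ⟨z, rfl⟩ := ZMod.intCast_surjective c
  rw [jA_int, D_el]
  exact (ZMod.intCast_zmod_eq_zero_iff_dvd _ 27).2 ⟨-14 * z * m', by push_cast; ring⟩
theorem om_j (c : ZMod 27) : om (jA c) = jA c := by
  obtain ⟨z, rfl⟩ := ZMod.intCast_surjective c
  rw [jA_int, om_el]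
  exact el_eq _ _ _ _ ⟨0, by ring⟩ ⟨-z, by ring⟩
theorem bar_j (c : ZMod 27) : bar (jA c) = jA c := by
  obtain ⟨z, rfl⟩ := ZMod.intCast_surjective c
  rw [jA_int, bar_el]
  exact el_eq _ _ _ _ ⟨0, by ring⟩ ⟨0, by ring⟩

/-- the action of `x^l` by conjugation -/
def W : ZMod 3 → A → A
  | 0, a => a
  | 1, a => om (om a)
  | 2, a => om a

theorem W_zero (a : A) : W 0 a = a := rfl
theorem W_one (a : A) : W 1 a = om (om a) := rfl
theorem W_two (a : A) : W 2 a = om a := rfl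
theorem W_add (l m : ZMod 3) (a : A) : W (l + m) a = W l (W m a) := by
  fin_cases l <;> fin_cases m <;>
    first
    | rfl
    | exact (om3 _).symm
theorem W_map_add (l : ZMod 3) (a b : A) : W l (a + b) = W l a + W l b := by
  fin_cases l
  · rfl
  · show om (om _) = om (om _) + om (om _); rw [om_add, om_add]
  · exact om_add _ _
theorem W_map_neg (l : ZMod 3) (a : A) : W l (-a) = - W l a := by
  fin_cases l
  · rfl
  · show om (om _) = -om (om _); rw [om_neg, om_neg]
  · exact om_neg _
theorem W_map_zero (l : ZMod 3) : W l 0 = 0 := by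
  have := W_map_add l 0 0
  simpa using this
theorem W_j (l : ZMod 3) (c) : W l (jA c) = jA c := by
  fin_cases l
  · rfl
  · show om (om _) = _; rw [om_j, om_j]
  · exact om_j _
theorem D_W (l : ZMod 3) (a b : A) : D (W l a) (W l b) = D a b := by
  fin_cases l
  · rfl
  · show D (om (om _)) (om (om _)) = _; rw [D_om, D_om]
  · exact D_om _ _
theorem bar_W (l : ZMod 3) (a : A) : bar (W l a) = W (-l) (bar a) := by
  fin_cases l
  · rfl
  · show bar (om (om _)) = om _
    rw [bar_om, bar_om, om3]
  · show bar (om _) = om (om _)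
    rw [bar_om]

/-- The group `G`: pairs `(a, l)` standing for `a * x^l`. -/
@[ext] structure Gr (e q : ℕ) where
  a : A
  l : ZMod (3 ^ (e + 3))

variable {e q : ℕ}

instance : Mul (Gr e q) := ⟨fun g h =>
  ⟨g.a + W (pi3 e g.l) h.a + jA (D g.a (W (pi3 e g.l) h.a)),
    g.l + h.l + iq e q (D g.a (W (pi3 e g.l) h.a))⟩⟩
instance : One (Gr e q) := ⟨⟨0, 0⟩⟩
instance : Inv (Gr e q) := ⟨fun g => ⟨-W (pi3 e (-g.l)) g.a, -g.l⟩⟩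

theorem mul_def (g h : Gr e q) : g * h =
  ⟨g.a + W (pi3 e g.l) h.a + jA (D g.a (W (pi3 e g.l) h.a)),
    g.l + h.l + iq e q (D g.a (W (pi3 e g.l) h.a))⟩ := rfl
theorem one_def : (1 : Gr e q) = ⟨0, 0⟩ := rfl
theorem inv_def (g : Gr e q) : g⁻¹ = ⟨-W (pi3 e (-g.l)) g.a, -g.l⟩ := rfl

theorem pi3_iq (he : 1 ≤ e) (c : ZMod 27) : pi3 e (iq e q c) = 0 := by
  obtain ⟨z, rfl⟩ := ZMod.intCast_surjective c
  rw [iq_int, pi3_int]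
  obtain ⟨k, rfl⟩ := Nat.exists_eq_add_of_le he
  exact (ZMod.intCast_zmod_eq_zero_iff_dvd _ 3).2 ⟨q * 3 ^ k * z, by push_cast; ring⟩

theorem D_zero_left (a : A) : D 0 a = 0 := by simp [D]
theorem D_zero_right (a : A) : D a 0 = 0 := by simp [D]

instance [he : Fact (1 ≤ e)] : Group (Gr e q) where
  mul_assoc g h k := by
    simp only [mul_def, map_add, (iq e q).map_add, pi3_iq he.out, add_zero, W_map_add, W_j, D_add_left, D_add_right,
      D_j_left, D_j_right, jA_add, W_add, D_W]
    ext1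
    · ac_rfl
    · ac_rfl
  one_mul g := by
    simp only [mul_def, one_def, map_zero, W_zero, D_zero_left, jA_zero, zero_add, add_zero]
  mul_one g := by
    simp only [mul_def, one_def, map_zero, W_map_zero, D_zero_right, jA_zero, add_zero]
  inv_mul_cancel g := by
    simp only [mul_def, one_def, inv_def, D_neg_left, D_self, neg_zero, jA_zero, map_zero]
    simp only [neg_add_cancel, add_zero]

open scoped commutatorElement

/-- the element `(n + m X) x^l` -/
def E (n m l : ℤ) : Gr e q := ⟨el n m, (l : ZMod (3 ^ (e + 3)))⟩

theorem E_surj (g : Gr e q) : ∃ n m l, g = E n m l := by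
  obtain ⟨a, l⟩ := g
  obtain ⟨n, m, rfl⟩ := el_surj a
  obtain ⟨z, rfl⟩ := ZMod.intCast_surjective l
  exact ⟨n, m, z, rfl⟩

theorem E_eq (n m l n' m' l' : ℤ) (h : (81 : ℤ) ∣ n - n') (h' : (27 : ℤ) ∣ m - m')
    (h'' : (3 : ℤ) ^ (e + 3) ∣ l - l') : (E n m l : Gr e q) = E n' m' l' := by
  unfold E
  rw [el_eq n m n' m' h h']
  congr 1
  exact ((ZMod.intCast_eq_intCast_iff_dvd_sub l' l _).2 (by simpa using h'')).symm

theorem pi3_of_dvd (l : ℤ) (h : 3 ∣ l) : pi3 e (l : ZMod (3 ^ (e + 3))) = 0 := by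
  rw [pi3_int]; exact (ZMod.intCast_zmod_eq_zero_iff_dvd _ 3).2 (by simpa using h)

theorem E_one [Fact (1 ≤ e)] : (1 : Gr e q) = E 0 0 0 := by
  rw [one_def]; simp [E, el]; rfl

theorem E_mul [Fact (1 ≤ e)] (n m l n' m' l' : ℤ) (h : 3 ∣ l) :
    (E n m l * E n' m' l' : Gr e q) =
      E (n + n' + -27 * (14 * (m * n' - n * m'))) (m + m')
        (l + l' + q * 3 ^ e * (14 * (m * n' - n * m'))) := by
  rw [mul_def]
  simp only [E]
  rw [pi3_of_dvd l h, W_zero, D_el, jA_int, iq_int, el_add, el_add]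
  simp

theorem E_inv [Fact (1 ≤ e)] (n m l : ℤ) (h : 3 ∣ l) :
    (E n m l : Gr e q)⁻¹ = E (-n) (-m) (-l) := by
  rw [inv_def]
  simp only [E]
  rw [map_neg, pi3_of_dvd l h, neg_zero, W_zero, el_neg, Int.cast_neg]

theorem E_mul_l [Fact (1 ≤ e)] (n m l t : ℤ) :
    (E n m l * E 0 0 t : Gr e q) = E n m (l + t) := by
  rw [mul_def]
  have : el 0 0 = 0 := by simp [el]
  simp [E, this, W_map_zero, D_zero_right, jA_zero]

theorem E_conj_x [Fact (1 ≤ e)] (n m l : ℤ) :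
    ((E 0 0 1)⁻¹ * E n m l * E 0 0 1 : Gr e q) = E (n - 3 * m) (n - 2 * m) l := by
  have h0 : el 0 0 = 0 := by simp [el]
  have h1 : ((E 0 0 1)⁻¹ : Gr e q) = E 0 0 (-1) := by
    rw [inv_def]; simp [E, h0, W_map_zero]
  have h2 : (E 0 0 (-1) * E n m l : Gr e q) = E (n - 3 * m) (n - 2 * m) (-1 + l) := by
    rw [mul_def]
    simp only [E, h0, D_zero_left, jA_zero, map_zero, add_zero, zero_add]
    rw [pi3_int, show ((-1 : ℤ) : ZMod 3) = 2 from by decide, W_two, om_el]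
    simp
  rw [h1, h2, E_mul_l]
  congr 1; ring

theorem comm_E [Fact (1 ≤ e)] (n m l n' m' l' : ℤ) (h : 3 ∣ l) (h' : 3 ∣ l') :
    comm' (E n m l : Gr e q) (E n' m' l') =
      E (-27 * (m * n' - n * m')) 0 (q * 3 ^ e * (m * n' - n * m')) := by
  have he : (3 : ℤ) ∣ 3 ^ e := dvd_pow_self _ (by have := Fact.out (p := 1 ≤ e); omega)
  obtain ⟨f, hf⟩ := he
  obtain ⟨k, rfl⟩ := h
  obtain ⟨k', rfl⟩ := h'
  unfold comm'
  rw [E_inv _ _ _ ⟨_, rfl⟩, E_inv _ _ _ ⟨_, rfl⟩, E_mul _ _ _ _ _ _ ⟨-k, by ring⟩,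
    E_mul, E_mul]
  · obtain ⟨d, hd⟩ : ∃ d, d = m * n' - n * m' := ⟨_, rfl⟩
    apply E_eq
    · refine ⟨-9 * d - 126 * (14 * (d * m) + 14 * (2 * d + 378 * d * m) * m'), ?_⟩
      subst hd; ring
    · exact ⟨0, by ring⟩
    · refine ⟨q * (d + 14 * (14 * (d * m) + 14 * (2 * d + 378 * d * m) * m')), ?_⟩
      subst hd; ring
  · rw [hf]
    exact ⟨-k - k' + q * f * (14 * (-m * -n' - -n * -m')) + k + q * f *
      (14 * ((-m + -m') * n - (-n + -n' + -27 * (14 * (-m * -n' - -n * -m'))) * m)), by ring⟩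
  · rw [hf]
    exact ⟨-k - k' + q * f * (14 * (-m * -n' - -n * -m')), by ring⟩

theorem comm_x [Fact (1 ≤ e)] (n m l : ℤ) (h : 3 ∣ l) :
    comm' (E n m l : Gr e q) (E 0 0 1) =
      E (-3 * m + -27 * (14 * (n ^ 2 - 3 * n * m + 3 * m ^ 2))) (n - 3 * m)
        (q * 3 ^ e * (14 * (n ^ 2 - 3 * n * m + 3 * m ^ 2))) := by
  have : comm' (E n m l : Gr e q) (E 0 0 1) = (E n m l)⁻¹ * ((E 0 0 1)⁻¹ * E n m l * E 0 0 1) := by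
    simp [comm', mul_assoc]
  rw [this, E_conj_x, E_inv _ _ _ h, E_mul _ _ _ _ _ _ ((dvd_neg).2 h)]
  congr 1 <;> ring

theorem E_zpow [Fact (1 ≤ e)] (n m k : ℤ) : (E n m 0 : Gr e q) ^ k = E (k * n) (k * m) 0 := by
  induction k using Int.induction_on with
  | zero => simp [E_one]
  | succ i ih =>
    rw [zpow_add_one, ih, E_mul _ _ _ _ _ _ (dvd_zero _)]; congr 1 <;> ring
  | pred i ih =>
    rw [zpow_sub_one, ih, E_inv _ _ _ (dvd_zero _), E_mul _ _ _ _ _ _ (dvd_zero _)]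
    congr 1 <;> ring

theorem x_zpow [Fact (1 ≤ e)] (t k : ℤ) : (E 0 0 t : Gr e q) ^ k = E 0 0 (k * t) := by
  induction k using Int.induction_on with
  | zero => simp [E_one]
  | succ i ih =>
    rw [zpow_add_one, ih, E_mul_l]; congr 1; ring
  | pred i ih =>
    rw [zpow_sub_one, ih, mul_inv_eq_iff_eq_mul, E_mul_l]; congr 1; ring

theorem x_pow [Fact (1 ≤ e)] (t : ℤ) (k : ℕ) : (E 0 0 t : Gr e q) ^ k = E 0 0 (k * t) := by
  rw [← zpow_natCast, x_zpow]

/-- the automorphism σ -/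
def sig [Fact (1 ≤ e)] : Gr e q ≃* Gr e q where
  toFun g := ⟨-bar g.a, -g.l⟩
  invFun g := ⟨-bar g.a, -g.l⟩
  left_inv g := by ext1 <;> simp [bar_neg, bar_bar]
  right_inv g := by ext1 <;> simp [bar_neg, bar_bar]
  map_mul' g h := by
    simp only [mul_def, bar_add, bar_W, bar_j, map_neg, W_map_neg, D_neg_left, D_neg_right, neg_neg]
    have : D (bar g.a) (W (-(pi3 e) g.l) (bar h.a)) = - D g.a (W ((pi3 e) g.l) h.a) := by
      rw [← bar_W, D_bar]
    rw [this, jA_neg, (iq e q).map_neg]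
    simp only [neg_add]

def rE (e : ℕ) : ZMod (3 ^ (e + 3)) →+ ZMod (3 ^ e) := mulHom _ _ 1 (by
  rw [one_mul, Int.cast_natCast, ZMod.natCast_eq_zero_iff]
  exact pow_dvd_pow _ (by omega))
def r3 : ZMod 81 →+ ZMod 3 := mulHom _ _ 1 (by decide)
theorem rE_int (z : ℤ) : rE e z = z := by simp [rE, mulHom_int]
theorem r3_int (z : ℤ) : r3 z = z := by simp [r3, mulHom_int]

theorem r3_om (a : A) : r3 (om a).1 = r3 a.1 := by
  obtain ⟨n, m, rfl⟩ := el_surj a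
  rw [om_el]
  simp only [el, r3_int]
  exact (ZMod.intCast_eq_intCast_iff_dvd_sub _ _ 3).2 ⟨m, by push_cast; ring⟩

theorem r3_W (l : ZMod 3) (a : A) : r3 (W l a).1 = r3 a.1 := by
  fin_cases l
  · rfl
  · show r3 (om (om a)).1 = _; rw [r3_om, r3_om]
  · exact r3_om a

theorem r3_jA (c : ZMod 27) : r3 (jA c).1 = 0 := by
  obtain ⟨z, rfl⟩ := ZMod.intCast_surjective c
  rw [jA_int]
  simp only [el, r3_int]
  exact (ZMod.intCast_zmod_eq_zero_iff_dvd _ 3).2 ⟨-9 * z, by push_cast; ring⟩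

theorem rE_iq (c : ZMod 27) : rE e (iq e q c) = 0 := by
  obtain ⟨z, rfl⟩ := ZMod.intCast_surjective c
  rw [iq_int, rE_int]
  exact (ZMod.intCast_zmod_eq_zero_iff_dvd _ _).2 ⟨q * z, by push_cast; ring⟩

/-- abelianization map -/
def ab [Fact (1 ≤ e)] : Gr e q →* Multiplicative (ZMod (3 ^ e) × ZMod 3) where
  toFun g := Multiplicative.ofAdd (rE e g.l, r3 g.a.1)
  map_one' := by simp [one_def]
  map_mul' g h := by
    rw [← ofAdd_add]
    simp only [mul_def, map_add, rE_iq, Prod.fst_add, r3_W, r3_jA, add_zero, Prod.mk_add_mk]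

theorem ab_E [Fact (1 ≤ e)] (n m l : ℤ) : ab (E n m l : Gr e q) =
    Multiplicative.ofAdd ((l : ZMod (3 ^ e)), (n : ZMod 3)) := by
  simp only [ab, E, el, MonoidHom.coe_mk, OneHom.coe_mk, rE_int, r3_int]

theorem ab_surj [Fact (1 ≤ e)] : Function.Surjective (ab : Gr e q →* _) := by
  intro z
  obtain ⟨⟨a, b⟩, rfl⟩ := Multiplicative.ofAdd.surjective z
  obtain ⟨l, rfl⟩ := ZMod.intCast_surjective a
  obtain ⟨n, rfl⟩ := ZMod.intCast_surjective b
  exact ⟨E n 0 l, ab_E _ _ _⟩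

theorem ab_ker [Fact (1 ≤ e)] (n m l : ℤ) : (E n m l : Gr e q) ∈ (ab : Gr e q →* _).ker ↔
    (3 : ℤ) ^ e ∣ l ∧ 3 ∣ n := by
  rw [MonoidHom.mem_ker, ab_E, ← ofAdd_zero, Multiplicative.ofAdd.injective.eq_iff,
    Prod.mk_eq_zero, ZMod.intCast_zmod_eq_zero_iff_dvd, ZMod.intCast_zmod_eq_zero_iff_dvd]
  push_cast; rfl

theorem comm'_mem {G : Type*} [Group G] (S : Subgroup G) {a b : G} (ha : a ∈ S) (hb : b ∈ S) :
    comm' a b ∈ S :=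
  S.mul_mem (S.mul_mem (S.mul_mem (S.inv_mem ha) (S.inv_mem hb)) ha) hb

theorem comm'_eq {G : Type*} [Group G] (a b : G) : comm' a b = ⁅a⁻¹, b⁻¹⁆ := by
  simp [comm', commutatorElement_def]

theorem three_dvd [h : Fact (1 ≤ e)] : (3 : ℤ) ∣ 3 ^ e :=
  dvd_pow_self _ (by have := h.out; omega)

theorem absorb [Fact (1 ≤ e)] (S : Subgroup (Gr e q))
    (hv : ∀ k : ℤ, (E (-27 * k) 0 (q * 3 ^ e * k) : Gr e q) ∈ S) (n m l k : ℤ) (hl : 3 ∣ l)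
    (h : (E (n + -27 * k) m (l + q * 3 ^ e * k) : Gr e q) ∈ S) : (E n m l : Gr e q) ∈ S := by
  have := S.mul_mem (hv (-k)) h
  rw [E_mul _ _ _ _ _ _ (by
    obtain ⟨f, hf⟩ := three_dvd (e := e); rw [hf]; exact ⟨q * f * -k, by ring⟩)] at this
  convert this using 1
  apply E_eq
  · exact ⟨-9 * (14 * k * m), by ring⟩
  · exact ⟨0, by ring⟩
  · exact ⟨q * (14 * k * m), by ring⟩

theorem addS [Fact (1 ≤ e)] (S : Subgroup (Gr e q))
    (hv : ∀ k : ℤ, (E (-27 * k) 0 (q * 3 ^ e * k) : Gr e q) ∈ S) (n m l n' m' l' : ℤ)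
    (hl : 3 ∣ l) (hl' : 3 ∣ l') (h : (E n m l : Gr e q) ∈ S) (h' : (E n' m' l' : Gr e q) ∈ S) :
    (E (n + n') (m + m') (l + l') : Gr e q) ∈ S := by
  have := S.mul_mem h h'
  rw [E_mul _ _ _ _ _ _ hl] at this
  exact absorb S hv _ _ _ _ (dvd_add hl hl') this

theorem closure_top [Fact (1 ≤ e)] :
    Subgroup.closure {(E 0 0 1 : Gr e q), E 1 0 0} = ⊤ := by
  set S := Subgroup.closure {(E 0 0 1 : Gr e q), E 1 0 0} with hS
  have hx : (E 0 0 1 : Gr e q) ∈ S := Subgroup.subset_closure (by simp)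
  have hy : (E 1 0 0 : Gr e q) ∈ S := Subgroup.subset_closure (by simp)
  have hyk (k : ℤ) : (E k 0 0 : Gr e q) ∈ S := by
    have := S.zpow_mem hy k
    rw [E_zpow] at this; simpa using this
  have hxk (k : ℤ) : (E 0 0 k : Gr e q) ∈ S := by
    have := S.zpow_mem hx k
    rw [x_zpow] at this; simpa using this
  have hs2 := comm'_mem S hy hx
  rw [comm_x _ _ _ (dvd_zero _)] at hs2
  norm_num at hs2
  have h3 : (3 : ℤ) ∣ q * 3 ^ e * 14 := by
    obtain ⟨f, hf⟩ := three_dvd (e := e); rw [hf]; exact ⟨q * f * 14, by ring⟩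
  have hv (k : ℤ) : (E (-27 * k) 0 (q * 3 ^ e * k) : Gr e q) ∈ S := by
    have := comm'_mem S hs2 (hyk k)
    rw [comm_E _ _ _ _ _ _ h3 (dvd_zero _)] at this
    simpa using this
  have h1 : (E 0 1 0 : Gr e q) ∈ S := absorb S hv _ _ _ 14 (dvd_zero _) (by simpa using hs2)
  have hm (m : ℤ) : (E 0 m 0 : Gr e q) ∈ S := by
    have := S.zpow_mem h1 m
    rw [E_zpow] at this; simpa using this
  rw [eq_top_iff]
  intro g _
  obtain ⟨n, m, l, rfl⟩ := E_surj g
  have := addS S hv _ _ _ _ _ _ (dvd_zero _) (dvd_zero _) (hyk n) (hm m)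
  have := S.mul_mem this (hxk l)
  rw [E_mul_l] at this
  simpa using this

theorem comm'_mem_commutator {G : Type*} [Group G] (a b : G) : comm' a b ∈ commutator G := by
  rw [comm'_eq]
  exact Subgroup.commutator_mem_commutator (Subgroup.mem_top _) (Subgroup.mem_top _)

theorem commutator_eq [Fact (1 ≤ e)] (r t : ℤ) (hr : q * r = 1 + 27 * t) :
    commutator (Gr e q) = (ab : Gr e q →* _).ker := by
  apply le_antisymm (Abelianization.commutator_subset_ker _)
  set S := commutator (Gr e q) with hS
  have hv (k : ℤ) : (E (-27 * k) 0 (q * 3 ^ e * k) : Gr e q) ∈ S := by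
    have := comm'_mem_commutator (E 0 k 0 : Gr e q) (E 1 0 0)
    rw [comm_E _ _ _ _ _ _ (dvd_zero _) (dvd_zero _)] at this
    simpa using this
  have hm (m : ℤ) : (E 0 m 0 : Gr e q) ∈ S := by
    have := comm'_mem_commutator (E m 0 0 : Gr e q) (E 0 0 1)
    rw [comm_x _ _ _ (dvd_zero _)] at this
    exact absorb S hv _ _ _ (14 * m ^ 2) (dvd_zero _) (by simpa using this)
  have hn (n : ℤ) : (E (3 * n) 0 0 : Gr e q) ∈ S := by
    have := comm'_mem_commutator (E 0 (-n) 0 : Gr e q) (E 0 0 1)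
    rw [comm_x _ _ _ (dvd_zero _)] at this
    have h2 : (E (3 * n) (3 * n) 0 : Gr e q) ∈ S :=
      absorb S hv _ _ _ (14 * (3 * n ^ 2)) (dvd_zero _) (by simpa using this)
    have := addS S hv _ _ _ _ _ _ (dvd_zero _) (dvd_zero _) h2 (hm (-(3 * n)))
    simpa using this
  have hl (l : ℤ) : (E 0 0 (3 ^ e * l) : Gr e q) ∈ S := by
    have := S.mul_mem (hn (9 * (r * l))) (hv (r * l))
    rw [E_mul _ _ _ _ _ _ (dvd_zero _)] at this
    convert this using 1
    apply E_eq
    · exact ⟨0, by ring⟩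
    · exact ⟨0, by ring⟩
    · refine ⟨-t * l, ?_⟩
      linear_combination (-3 ^ e * l) * hr
  intro g hg
  obtain ⟨n, m, l, rfl⟩ := E_surj g
  rw [ab_ker] at hg
  obtain ⟨⟨l, rfl⟩, ⟨n, rfl⟩⟩ := hg
  have := addS S hv _ _ _ _ _ _ (dvd_zero _) (dvd_zero _) (hn n) (hm m)
  have := S.mul_mem this (hl l)
  rw [E_mul_l] at this
  simpa using this

theorem derived2 [Fact (1 ≤ e)] (r t : ℤ) (hr : q * r = 1 + 27 * t) :
    derivedSeries (Gr e q) 2 = Subgroup.zpowers (E 0 0 (3 ^ (e + 1)) : Gr e q) := by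
  rw [derivedSeries_succ, derivedSeries_one, commutator_eq r t hr]
  apply le_antisymm
  · rw [Subgroup.commutator_le]
    intro g hg h hh
    rw [← inv_inv g, ← inv_inv h, ← comm'_eq]
    rw [← inv_mem_iff] at hg hh
    obtain ⟨n, m, l, h1⟩ := E_surj g⁻¹
    obtain ⟨n', m', l', h2⟩ := E_surj h⁻¹
    rw [h1, ab_ker] at hg
    rw [h2, ab_ker] at hh
    rw [h1, h2, comm_E _ _ _ _ _ _ (three_dvd.trans hg.1) (three_dvd.trans hh.1)]
    obtain ⟨-, ⟨n, rfl⟩⟩ := hg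
    obtain ⟨-, ⟨n', rfl⟩⟩ := hh
    refine Subgroup.mem_zpowers_iff.2 ⟨q * (m * n' - n * m'), ?_⟩
    rw [x_zpow]
    apply E_eq
    · exact ⟨m * n' - n * m', by ring⟩
    · exact ⟨0, by ring⟩
    · exact ⟨0, by ring⟩
  · rw [Subgroup.zpowers_le]
    have hk1 : (E 0 r 0 : Gr e q) ∈ (ab : Gr e q →* _).ker := by rw [ab_ker]; simp
    have hk2 : (E 3 0 0 : Gr e q) ∈ (ab : Gr e q →* _).ker := by rw [ab_ker]; simp
    have := Subgroup.commutator_mem_commutator (inv_mem hk1) (inv_mem hk2)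
    rw [← comm'_eq, comm_E _ _ _ _ _ _ (dvd_zero _) (dvd_zero _)] at this
    convert this using 1
    apply E_eq
    · exact ⟨r, by ring⟩
    · exact ⟨0, by ring⟩
    · refine ⟨-3 * t, ?_⟩
      linear_combination (-3 ^ (e + 1)) * hr

theorem card_Gr : Nat.card (Gr e q) = 3 ^ (10 + e) := by
  have f : Gr e q ≃ A × ZMod (3 ^ (e + 3)) :=
    ⟨fun g => (g.a, g.l), fun p => ⟨p.1, p.2⟩, fun _ => rfl, fun _ => rfl⟩
  rw [Nat.card_congr f, Nat.card_prod, Nat.card_prod, Nat.card_zmod, Nat.card_zmod, Nat.card_zmod]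
  ring

theorem E00_eq_one [Fact (1 ≤ e)] (l : ℤ) : (E 0 0 l : Gr e q) = 1 ↔ (3 : ℤ) ^ (e + 3) ∣ l := by
  constructor
  · intro h
    have := congrArg Gr.l h
    rw [one_def] at this
    have := (ZMod.intCast_zmod_eq_zero_iff_dvd l (3 ^ (e + 3))).1 this
    simpa using this
  · intro h
    rw [E_one]
    exact E_eq _ _ _ _ _ _ ⟨0, by ring⟩ ⟨0, by ring⟩ (by simpa using h)

theorem card_Z [Fact (1 ≤ e)] :
    Nat.card (Subgroup.zpowers (E 0 0 (3 ^ (e + 1)) : Gr e q)) = 9 := by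
  rw [Nat.card_zpowers]
  apply orderOf_eq_prime_pow (p := 3) (n := 1) (x := (E 0 0 (3 ^ (e + 1)) : Gr e q))
  · rw [x_pow, E00_eq_one]
    intro h
    have h2 : (3 : ℤ) ^ (e + 3) ≤ 3 ^ (e + 2) :=
      Int.le_of_dvd (by positivity) (by convert h using 1; push_cast; ring)
    have := pow_lt_pow_right₀ (show (1 : ℤ) < 3 by norm_num) (show e + 2 < e + 3 by omega)
    omega
  · rw [x_pow, E00_eq_one]
    exact ⟨1, by push_cast; ring⟩

/-- the metabelian quotient -/
abbrev M (e q : ℕ) [Fact (1 ≤ e)] : Type := Gr e q ⧸ derivedSeries (Gr e q) 2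

/-- the image of `E n m l` in `M` -/
def mE [Fact (1 ≤ e)] (n m l : ℤ) : M e q := QuotientGroup.mk (E n m l)

theorem mE_eq [Fact (1 ≤ e)] (r t : ℤ) (hr : q * r = 1 + 27 * t) (n m l n' m' l' : ℤ)
    (h : (81 : ℤ) ∣ n - n') (h' : (27 : ℤ) ∣ m - m')
    (h'' : (3 : ℤ) ^ (e + 1) ∣ l - l') : (mE n m l : M e q) = mE n' m' l' := by
  unfold mE
  rw [QuotientGroup.eq, derived2 r t hr]
  obtain ⟨k, hk⟩ := h''
  refine Subgroup.mem_zpowers_iff.2 ⟨-k, ?_⟩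
  rw [x_zpow, eq_inv_mul_iff_mul_eq, E_mul_l]
  refine E_eq _ _ _ _ _ _ h h' ⟨0, ?_⟩
  linear_combination hk

theorem mE_comm_x [Fact (1 ≤ e)] (n m l : ℤ) (h : 3 ∣ l) :
    comm' (mE n m l : M e q) (mE 0 0 1) =
      mE (-3 * m + -27 * (14 * (n ^ 2 - 3 * n * m + 3 * m ^ 2))) (n - 3 * m)
        (q * 3 ^ e * (14 * (n ^ 2 - 3 * n * m + 3 * m ^ 2))) := by
  unfold mE; rw [← comm_x n m l h]; rfl

theorem mE_comm [Fact (1 ≤ e)] (n m l n' m' l' : ℤ) (h : 3 ∣ l) (h' : 3 ∣ l') :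
    comm' (mE n m l : M e q) (mE n' m' l') =
      mE (-27 * (m * n' - n * m')) 0 (q * 3 ^ e * (m * n' - n * m')) := by
  unfold mE; rw [← comm_E n m l n' m' l' h h']; rfl

theorem mE_mul [Fact (1 ≤ e)] (n m l n' m' l' : ℤ) (h : 3 ∣ l) :
    (mE n m l * mE n' m' l' : M e q) =
      mE (n + n' + -27 * (14 * (m * n' - n * m'))) (m + m')
        (l + l' + q * 3 ^ e * (14 * (m * n' - n * m'))) := by
  unfold mE; rw [← E_mul n m l n' m' l' h]; rfl

theorem mE_pow [Fact (1 ≤ e)] (n m l : ℤ) (h : 3 ∣ l) (k : ℕ) :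
    (mE n m l : M e q) ^ k = mE (k * n) (k * m) (k * l) := by
  induction k with
  | zero =>
    rw [pow_zero]; unfold mE; simp only [Nat.cast_zero, zero_mul]; rw [← E_one]; rfl
  | succ k ih =>
    rw [pow_succ, ih, mE_mul _ _ _ _ _ _ (h.mul_left _)]
    congr 1 <;> push_cast <;> ring

theorem mx_pow [Fact (1 ≤ e)] (t : ℤ) (k : ℕ) : (mE 0 0 t : M e q) ^ k = mE 0 0 (k * t) := by
  unfold mE; rw [← x_pow]; rfl

theorem q3 [Fact (1 ≤ e)] (c : ℤ) : (3 : ℤ) ∣ q * 3 ^ e * c :=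
  ((three_dvd).mul_left _).mul_right _

theorem s2M [Fact (1 ≤ e)] : sgen (mE 0 0 1 : M e q) (mE 1 0 0) 2 = mE (-378) 1 (q * 3 ^ e * 14) := by
  show comm' (mE 1 0 0 : M e q) (mE 0 0 1) = _
  rw [mE_comm_x _ _ _ (dvd_zero _)]; norm_num

theorem s3M [Fact (1 ≤ e)] (r t : ℤ) (hr : (q : ℤ) * r = 1 + 27 * t) :
    sgen (mE 0 0 1 : M e q) (mE 1 0 0) 3 = mE (-3) (-3) 0 := by
  show comm' (sgen (mE 0 0 1 : M e q) (mE 1 0 0) 2) (mE 0 0 1) = _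
  rw [s2M, mE_comm_x _ _ _ (q3 _)]
  refine mE_eq r t hr _ _ _ _ _ _ (by norm_num) (by norm_num) ⟨q * 14 * 48007, by ring⟩

theorem s4M [Fact (1 ≤ e)] (r t : ℤ) (hr : (q : ℤ) * r = 1 + 27 * t) :
    sgen (mE 0 0 1 : M e q) (mE 1 0 0) 4 = mE 9 6 0 := by
  show comm' (sgen (mE 0 0 1 : M e q) (mE 1 0 0) 3) (mE 0 0 1) = _
  rw [s3M r t hr, mE_comm_x _ _ _ (dvd_zero _)]
  refine mE_eq r t hr _ _ _ _ _ _ (by norm_num) (by norm_num) ⟨q * 14 * 3, by ring⟩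

theorem s5M [Fact (1 ≤ e)] (r t : ℤ) (hr : (q : ℤ) * r = 1 + 27 * t) :
    sgen (mE 0 0 1 : M e q) (mE 1 0 0) 5 = mE (-18) (-9) 0 := by
  show comm' (sgen (mE 0 0 1 : M e q) (mE 1 0 0) 4) (mE 0 0 1) = _
  rw [s4M r t hr, mE_comm_x _ _ _ (dvd_zero _)]
  refine mE_eq r t hr _ _ _ _ _ _ (by norm_num) (by norm_num) ⟨q * 14 * 9, by ring⟩

theorem s6M [Fact (1 ≤ e)] (r t : ℤ) (hr : (q : ℤ) * r = 1 + 27 * t) :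
    sgen (mE 0 0 1 : M e q) (mE 1 0 0) 6 = mE 27 9 0 := by
  show comm' (sgen (mE 0 0 1 : M e q) (mE 1 0 0) 5) (mE 0 0 1) = _
  rw [s5M r t hr, mE_comm_x _ _ _ (dvd_zero _)]
  refine mE_eq r t hr _ _ _ _ _ _ (by norm_num) (by norm_num) ⟨q * 14 * 27, by ring⟩

theorem s7M [Fact (1 ≤ e)] (r t : ℤ) (hr : (q : ℤ) * r = 1 + 27 * t) :
    sgen (mE 0 0 1 : M e q) (mE 1 0 0) 7 = mE (-27) 0 0 := by
  show comm' (sgen (mE 0 0 1 : M e q) (mE 1 0 0) 6) (mE 0 0 1) = _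
  rw [s6M r t hr, mE_comm_x _ _ _ (dvd_zero _)]
  refine mE_eq r t hr _ _ _ _ _ _ (by norm_num) (by norm_num) ⟨q * 14 * 81, by ring⟩

theorem abel_equiv {K B : Type*} [Group K] [CommGroup B] (f : K →* B)
    (hf : Function.Surjective f) (h : commutator K = f.ker) :
    Nonempty (Abelianization K ≃* B) :=
  ⟨(QuotientGroup.quotientMulEquivOfEq h).trans (QuotientGroup.quotientKerEquivOfSurjective f hf)⟩

theorem abel_equiv_quot {K B : Type*} [Group K] [CommGroup B] (f : K →* B)
    (hf : Function.Surjective f) (h : commutator K = f.ker) (N : Subgroup K) [N.Normal]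
    (hN : N ≤ commutator K) : Nonempty (Abelianization (K ⧸ N) ≃* B) := by
  refine abel_equiv (QuotientGroup.lift N f (by rw [← h]; exact hN)) ?_ ?_
  · intro b
    obtain ⟨k, rfl⟩ := hf b
    exact ⟨QuotientGroup.mk k, rfl⟩
  · apply le_antisymm (Abelianization.commutator_subset_ker _)
    intro g hg
    obtain ⟨k, rfl⟩ := QuotientGroup.mk_surjective g
    have hk : k ∈ commutator K := by rw [h]; exact hg
    have := map_derivedSeries_eq (f := QuotientGroup.mk' N) (QuotientGroup.mk'_surjective N) 1
    rw [derivedSeries_one, derivedSeries_one] at this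
    rw [← this]
    exact ⟨k, hk, rfl⟩

theorem sig_ab [Fact (1 ≤ e)] (g : Gr e q) : ab (sig g) = (ab g)⁻¹ := by
  obtain ⟨n, m, l, rfl⟩ := E_surj g
  have : sig (E n m l : Gr e q) = E (-(n - 3 * m)) m (-l) := by
    show (⟨-bar (el n m), -((l : ℤ) : ZMod (3 ^ (e + 3)))⟩ : Gr e q) = _
    rw [bar_el, el_neg]; simp [E]
  rw [this, ab_E, ab_E, ← ofAdd_neg, Prod.neg_mk]
  congr 2
  · simp
  · rw [← Int.cast_neg]
    exact (ZMod.intCast_eq_intCast_iff_dvd_sub _ _ 3).2 ⟨-m, by push_cast; ring⟩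

theorem sigmaG [Fact (1 ≤ e)] (r t : ℤ) (hr : q * r = 1 + 27 * t) : IsSigmaGroup (Gr e q) := by
  refine ⟨sig, fun g => ?_⟩
  rw [eq_inv_iff_mul_eq_one, ← map_mul]
  refine (QuotientGroup.eq_one_iff (N := commutator (Gr e q)) _).2 ?_
  rw [commutator_eq r t hr, MonoidHom.mem_ker, map_mul, sig_ab, inv_mul_cancel]

theorem sigma_quot {K : Type*} [Group K] (hK : IsSigmaGroup K) (N : Subgroup K)
    [hN : N.Characteristic] : IsSigmaGroup (K ⧸ N) := by
  obtain ⟨σ, hσ⟩ := hK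
  refine ⟨QuotientGroup.congr N N σ (Subgroup.characteristic_iff_map_eq.1 hN σ), fun g => ?_⟩
  obtain ⟨k, rfl⟩ := QuotientGroup.mk_surjective g
  have := congrArg (Abelianization.map (QuotientGroup.mk' N)) (hσ k)
  rw [map_inv, Abelianization.map_of, Abelianization.map_of] at this
  exact this

end D6

theorem stmt15 (e i : ℕ) (he : 7 ≤ e) (hi : i = 2 ∨ i = 3) :
    ∃ (M : Type) (_ : Group M) (_ : Finite M) (x y : M),
      Subgroup.closure {x, y} = ⊤ ∧
      Nat.card M = 3 ^ (8 + e) ∧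
      IsMetabelian M ∧
      IsSigmaGroup M ∧
      (x ^ 3 ^ e) ^ 3 = 1 ∧
      y ^ 3 = sgen x y 3 ^ 2 * sgen x y 4 ∧
      sgen x y 2 ^ 3 = sgen x y 4 ^ 2 * sgen x y 5 ∧
      sgen x y 3 ^ 3 = sgen x y 5 ^ 2 * sgen x y 6 ∧
      sgen x y 4 ^ 3 = sgen x y 6 ^ 2 * sgen x y 7 ∧
      sgen x y 5 ^ 3 = sgen x y 7 ^ 2 ∧
      tgenD x y 3 = sgen x y 7 * (x ^ 3 ^ e) ^ (i - 1) ∧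
      Nonempty (Abelianization M ≃* Multiplicative (ZMod (3 ^ e) × ZMod 3)) ∧
      ∃ (G : Type) (_ : Group G) (_ : Finite G),
        Nat.card G = 3 ^ (10 + e) ∧
        Nonempty (Abelianization G ≃* Multiplicative (ZMod (3 ^ e) × ZMod 3)) ∧
        IsSigmaGroup G ∧
        derivedSeries G 2 ≠ ⊥ ∧
        derivedSeries G 3 = ⊥ ∧
        ∃ φ : G →* M, Function.Surjective φ ∧ φ.ker = derivedSeries G 2 := by
  have : Fact (1 ≤ e) := ⟨by omega⟩
  obtain ⟨q, hq⟩ : ∃ q, q = i - 1 := ⟨_, rfl⟩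
  rw [← hq]
  obtain ⟨r, t, hr⟩ : ∃ r t : ℤ, (q : ℤ) * r = 1 + 27 * t := by
    rcases hi with rfl | rfl
    · exact ⟨1, 0, by rw [hq]; norm_num⟩
    · exact ⟨14, 1, by rw [hq]; norm_num⟩
  have hfin : Finite (D6.Gr e q) := Nat.finite_of_card_ne_zero (by
    rw [D6.card_Gr]; positivity)
  have hd2 := D6.derived2 (e := e) r t hr
  have hcZ : Nat.card (derivedSeries (D6.Gr e q) 2) = 9 := by rw [hd2]; exact D6.card_Z
  have hσ := D6.sigmaG (e := e) r t hr
  have hle : derivedSeries (D6.Gr e q) 2 ≤ commutator (D6.Gr e q) := by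
    rw [← derivedSeries_one]; exact derivedSeries_antitone _ (by norm_num)
  have hchar : (derivedSeries (D6.Gr e q) 2).Characteristic := inferInstance
  refine ⟨D6.M e q, inferInstance, inferInstance, D6.mE 0 0 1, D6.mE 1 0 0, ?_, ?_, ?_, ?_, ?_,
    ?_, ?_, ?_, ?_, ?_, ?_, ?_, D6.Gr e q, inferInstance, hfin, D6.card_Gr, ?_, hσ, ?_, ?_,
    QuotientGroup.mk' _, QuotientGroup.mk'_surjective _, QuotientGroup.ker_mk' _⟩
  · have := congrArg (Subgroup.map (QuotientGroup.mk' (derivedSeries (D6.Gr e q) 2)))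
      (D6.closure_top (e := e) (q := q))
    rw [MonoidHom.map_closure, Subgroup.map_top_of_surjective _ (QuotientGroup.mk'_surjective _),
      Set.image_pair] at this
    exact this
  · have := Subgroup.card_eq_card_quotient_mul_card_subgroup (derivedSeries (D6.Gr e q) 2)
    rw [hcZ, D6.card_Gr] at this
    have h2 : 3 ^ (10 + e) = 3 ^ (8 + e) * 9 := by ring
    show Nat.card (D6.Gr e q ⧸ derivedSeries (D6.Gr e q) 2) = _
    omega
  · unfold IsMetabelian
    rw [← map_derivedSeries_eq (QuotientGroup.mk'_surjective (derivedSeries (D6.Gr e q) 2)) 2,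
      Subgroup.map_eq_bot_iff, QuotientGroup.ker_mk']
  · exact D6.sigma_quot hσ _
  · rw [D6.mx_pow, D6.mx_pow]
    have h1 : (1 : D6.M e q) = D6.mE 0 0 0 := by unfold D6.mE; rw [← D6.E_one]; rfl
    rw [h1]
    exact D6.mE_eq r t hr _ _ _ _ _ _ ⟨0, by ring⟩ ⟨0, by ring⟩ ⟨1, by push_cast; ring⟩
  · rw [D6.s3M r t hr, D6.s4M r t hr, D6.mE_pow _ _ _ (dvd_zero _), D6.mE_pow _ _ _ (dvd_zero _),
      D6.mE_mul _ _ _ _ _ _ (by norm_num)]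
    refine D6.mE_eq r t hr _ _ _ _ _ _ (by norm_num) (by norm_num) ⟨q * 84, by push_cast; ring⟩
  · rw [D6.s2M, D6.s4M r t hr, D6.s5M r t hr, D6.mE_pow _ _ _ (D6.q3 _),
      D6.mE_pow _ _ _ (dvd_zero _), D6.mE_mul _ _ _ _ _ _ (by norm_num)]
    refine D6.mE_eq r t hr _ _ _ _ _ _ (by norm_num) (by norm_num) ⟨q * 266, by push_cast; ring⟩
  · rw [D6.s3M r t hr, D6.s5M r t hr, D6.s6M r t hr, D6.mE_pow _ _ _ (dvd_zero _),
      D6.mE_pow _ _ _ (dvd_zero _), D6.mE_mul _ _ _ _ _ _ (by norm_num)]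
    refine D6.mE_eq r t hr _ _ _ _ _ _ (by norm_num) (by norm_num) ⟨q * 756, by push_cast; ring⟩
  · rw [D6.s4M r t hr, D6.s6M r t hr, D6.s7M r t hr, D6.mE_pow _ _ _ (dvd_zero _),
      D6.mE_pow _ _ _ (dvd_zero _), D6.mE_mul _ _ _ _ _ _ (by norm_num)]
    refine D6.mE_eq r t hr _ _ _ _ _ _ (by norm_num) (by norm_num) ⟨q * 2268, by push_cast; ring⟩
  · rw [D6.s5M r t hr, D6.s7M r t hr, D6.mE_pow _ _ _ (dvd_zero _),
      D6.mE_pow _ _ _ (dvd_zero _)]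
    refine D6.mE_eq r t hr _ _ _ _ _ _ (by norm_num) (by norm_num) ⟨0, by push_cast; ring⟩
  · show comm' (sgen _ _ 2) _ = _
    rw [D6.s2M, D6.s7M r t hr, D6.mE_comm _ _ _ _ _ _ (D6.q3 _) (dvd_zero _), D6.mx_pow,
      D6.mx_pow, D6.mE_mul _ _ _ _ _ _ (dvd_zero _)]
    refine D6.mE_eq r t hr _ _ _ _ _ _ (by norm_num) (by norm_num) ⟨0, by push_cast; ring⟩
  · exact D6.abel_equiv_quot D6.ab D6.ab_surj (D6.commutator_eq r t hr) _ hle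
  · exact D6.abel_equiv D6.ab D6.ab_surj (D6.commutator_eq r t hr)
  · intro h
    rw [h, Subgroup.card_bot] at hcZ
    omega
  · rw [derivedSeries_succ, hd2, Subgroup.commutator_eq_bot_iff_le_centralizer]
    intro g hg h hh
    obtain ⟨a, rfl⟩ := Subgroup.mem_zpowers_iff.1 hg
    obtain ⟨b, rfl⟩ := Subgroup.mem_zpowers_iff.1 hh
    rw [← zpow_add, ← zpow_add, add_comm a b]
end
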